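/- If G is a bipartite almost planar simple graph with v(G) ≥ 4 vertices and exactly 3·v(G) − 8 edges, then v(G) is even and v(G) ≠ 6. -/

import Mathlib

/-!
The theorem follows from the bound `m ≤ 3 n - 8` on the number `m` of edges of a bipartite almost
planar graph on `n ≥ 4` vertices, together with the fact that `n` is even in case of equality
(`BAP.edge_bound`). The value `n = 6` is impossible because `3 * 6 - 8 = 10` exceeds the number
`9` of edges of `K₃,₃` (`BAP.four_mul_ncard_le`).

**From drawings to combinatorial maps.** No form of the Jordan curve theorem is used. A map is a
pair of permutations `(σ, α)` of a finite set of darts, and planarity is expressed by Euler's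
formula, as `defect σ α ≤ 0`. The defect does not increase when a cycle is split
(`defect_mul_swap_le`), so deletions and contractions of edges preserve planarity. The square grid
is planar by direct count (`grid_planar`). In a drawing where each edge crosses at most one other
edge, each edge is cut into two end pieces and a middle part that contains all its crossings; the
middle parts of two edges that cross are united. This gives finitely many disjoint compact connected
sets (vertices and crossing regions) joined by disjoint arcs, one for each half-edge. A fine
grid separates them, so they form a minor of the grid, and there is a planar hypermap on the
half-edges whose two permutations rotate around the vertices and around the crossing regions
(`exists_hypermap_of_drawing`).

**The polygon map.** Replacing every crossing region by the polygon through its ends gives a planar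
map on the vertices of the graph (`exists_polygons`): a digon for an uncrossed edge, and a
quadrangle for two crossing edges. If the vertices of the quadrangle are distinct and coloured
`A, A, B, B` in cyclic order, the two edges are its diagonals; in all other cases the ends of each
edge are joined by a side.
Loops and superfluous sides of digons are deleted, so that all faces have at least three sides
once the degrees are at least three (`exists_map_of_almostPlanar`).

**Counting.** Let all degrees be at least three. Let the map have `2 e` darts and `f` faces, among
them `q` quadrangles coloured `A, A, B, B`. Let `k` darts be monochromatic, let `c` corners lie
between two-coloured darts, and let `s` darts be serving, that is, lie between two such quadrangles
and start at a vertex of degree two of the map. Then: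

* each vertex sees at least two among the monochromatic darts, corners and serving darts starting
  there, so `2 n ≤ k + c + s` (`PMap.Good.two_le_vw`);
* each face gets total weight at least `8` if every dart has weight `3`, less `1` for a corner and
  less `4` in total for a quadrangle, so `8 f ≤ 6 e - c - 4 q` (`PMap.Good.seg_sum`);
* every edge of the graph is a two-coloured side or a diagonal, and each serving dart witnesses two
  diagonals with the same ends. Treating the serving darts of the two colours separately gives
  `2 m + s ≤ (2 e - k) + 4 q` (`PMap.Good.edges_le_true`, `PMap.Good.edges_le_false`).

With Euler's formula `e + 2 ≤ n + f` these add up to `2 m ≤ 6 n - 16`. In the case of equality all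
these estimates are sharp; in particular no two consecutive sides of a face are monochromatic,
which determines the number of two-coloured sides (`PMap.card_two_colored`), and counting
modulo two at the vertices of one colour shows that `m`, and therefore `n`, is even
(`PMap.Good.bound`). A vertex of degree at most two is removed by induction, which loses at most two
edges, so that equality cannot occur.
-/

open Set

/-- A drawing of a simple graph `G` in the plane: an injective placement of vertices
together with, for each edge, a continuous injective curve between the points of its
endpoints, whose interior avoids all vertex points; any two distinct edge curves meet in
finitely many points, and no point lies in the interiors of three distinct edge curves. -/
structure Drawing {V : Type*} (G : SimpleGraph V) where
  pos : V → ℝ × ℝ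
  pos_inj : Function.Injective pos
  curve : G.edgeSet → ℝ → ℝ × ℝ
  curve_cont : ∀ e, ContinuousOn (curve e) (Icc 0 1)
  curve_inj : ∀ e, InjOn (curve e) (Icc 0 1)
  curve_ends : ∀ e : G.edgeSet, ∃ a b : V, (e : Sym2 V) = s(a, b) ∧
      curve e 0 = pos a ∧ curve e 1 = pos b
  interior_no_vertex : ∀ e, ∀ t ∈ Ioo (0 : ℝ) 1, ∀ v, curve e t ≠ pos v
  finite_meet : ∀ e f, e ≠ f → (curve e '' Icc 0 1 ∩ curve f '' Icc 0 1).Finite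
  no_triple_point : ∀ p : ℝ × ℝ, ∀ e f g, e ≠ f → e ≠ g → f ≠ g →
      p ∈ curve e '' Ioo 0 1 → p ∈ curve f '' Ioo 0 1 → p ∈ curve g '' Ioo 0 1 → False

/-- Two edges cross in a drawing if some point lies in the interiors of both curves. -/
def Drawing.Crosses {V : Type*} {G : SimpleGraph V} (D : Drawing G) (e f : G.edgeSet) : Prop :=
  e ≠ f ∧ ∃ p : ℝ × ℝ, p ∈ D.curve e '' Ioo 0 1 ∧ p ∈ D.curve f '' Ioo 0 1

/-- A drawing is almost planar (1-planar) if every edge crosses at most one other edge. -/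
def Drawing.IsAlmostPlanar {V : Type*} {G : SimpleGraph V} (D : Drawing G) : Prop :=
  ∀ e f g, D.Crosses e f → D.Crosses e g → f = g

/-- A graph is almost planar if it admits a drawing in which every edge crosses at most
one other edge. -/
def SimpleGraph.AlmostPlanar {V : Type*} (G : SimpleGraph V) : Prop :=
  ∃ D : Drawing G, D.IsAlmostPlanar

namespace BAP

open Equiv

universe u

/-! ### Counting cycles -/

theorem natCard_quot_le_of_imp {D : Type*} [Finite D] {r r' : D → D → Prop}
    (h : ∀ x y, r x y → Quot.mk r' x = Quot.mk r' y) :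
    Nat.card (Quot r') ≤ Nat.card (Quot r) := by
  refine Nat.card_le_card_of_surjective (Quot.lift (Quot.mk r') h) ?_
  rintro ⟨x⟩
  exact ⟨Quot.mk r x, rfl⟩

theorem natCard_le_quot {D L : Type*} [Finite D] {r : D → D → Prop} (f : D → L)
    (hf : Function.Surjective f) (h : ∀ x y, r x y → f x = f y) :
    Nat.card L ≤ Nat.card (Quot r) := by
  refine Nat.card_le_card_of_surjective (Quot.lift f h) ?_
  intro l
  obtain ⟨x, rfl⟩ := hf l
  exact ⟨Quot.mk r x, rfl⟩

theorem natCard_quot_add_pair {D : Type*} [Finite D] (r : D → D → Prop) (a b : D) :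
    Nat.card (Quot r) ≤ Nat.card (Quot fun x y => r x y ∨ (x = a ∧ y = b)) + 1 ∧
    (Quot.mk r a ≠ Quot.mk r b →
      Nat.card (Quot fun x y => r x y ∨ (x = a ∧ y = b)) + 1 = Nat.card (Quot r)) := by
  classical
  by_cases hab : Quot.mk r a = Quot.mk r b
  · refine ⟨(natCard_quot_le_of_imp ?_).trans (Nat.le_succ _), fun h => absurd hab h⟩
    rintro x y (h | ⟨rfl, rfl⟩)
    · exact Quot.sound h
    · exact hab
  · set r' : D → D → Prop := fun x y => r x y ∨ (x = a ∧ y = b)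
    have key : Nat.card (Quot r') + 1 = Nat.card (Quot r) := by
      let e : Quot r' ≃ {q : Quot r // q ≠ Quot.mk r b} :=
        { toFun := Quot.lift (fun x => if h : Quot.mk r x = Quot.mk r b then ⟨Quot.mk r a, hab⟩
              else ⟨Quot.mk r x, h⟩) (by
            rintro x y (h | ⟨rfl, rfl⟩)
            · simp only [Quot.sound h]
            · simp [hab])
          invFun := fun q => Quot.lift (Quot.mk r') (fun x y h => Quot.sound (Or.inl h)) q.1
          left_inv := by
            rintro ⟨x⟩
            by_cases h : Quot.mk r x = Quot.mk r b
            · have h1 : Quot.mk r' x = Quot.mk r' b :=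
                congrArg (Quot.lift (Quot.mk r') (fun x y h => Quot.sound (Or.inl h))) h
              have h2 : Quot.mk r' a = Quot.mk r' b := Quot.sound (Or.inr ⟨rfl, rfl⟩)
              simp [h, h1, h2]
            · simp [h]
          right_inv := by
            rintro ⟨⟨x⟩, hx⟩
            have hx' : Quot.mk r x ≠ Quot.mk r b := hx
            simp [hx'] }
      rw [Nat.card_congr e]
      have := Fintype.ofFinite (Quot r)
      rw [Nat.card_eq_fintype_card, Nat.card_eq_fintype_card]
      rw [Fintype.card_subtype_compl, Fintype.card_subtype_eq]
      have : 0 < Fintype.card (Quot r) := Fintype.card_pos_iff.2 ⟨Quot.mk r a⟩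
      omega
    exact ⟨key.symm.le, fun _ => key⟩

/-- The cycle of a permutation containing a given point, fixed points included. -/
def cls {D : Type*} (σ : Perm D) (x : D) : Quot (fun x y => σ x = y) := Quot.mk _ x

/-- The number of cycles of a permutation, fixed points included. -/
noncomputable def cyc {D : Type*} (σ : Perm D) : ℕ := Nat.card (Quot fun x y => σ x = y)

/-- The number of orbits of the group generated by two permutations. -/
noncomputable def comps {D : Type*} (σ α : Perm D) : ℕ :=
  Nat.card (Quot fun x y => σ x = y ∨ α x = y)

theorem cls_apply {D : Type*} (σ : Perm D) (x : D) : cls σ (σ x) = cls σ x :=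
  (Quot.sound (r := fun x y => σ x = y) rfl).symm

theorem cls_pow {D : Type*} (σ : Perm D) (n : ℕ) (x : D) : cls σ ((σ ^ n) x) = cls σ x := by
  induction n with
  | zero => rfl
  | succ n ih => rw [pow_succ', Perm.mul_apply, cls_apply, ih]

/-- Functions invariant under `σ` are constant on the cycles of `σ`. -/
theorem eq_of_cls_eq {D L : Type*} {σ : Perm D} {x y : D} (h : cls σ x = cls σ y) (f : D → L)
    (hf : ∀ z, f (σ z) = f z) : f x = f y :=
  congrArg (Quot.lift f (by rintro a b rfl; exact (hf a).symm)) h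

theorem cls_inv {D : Type*} {σ : Perm D} {x y : D} (h : cls σ x = cls σ y) :
    cls σ⁻¹ x = cls σ⁻¹ y := by
  refine eq_of_cls_eq h (cls σ⁻¹) fun z => ?_
  have := cls_apply σ⁻¹ (σ z)
  rw [← this, Perm.inv_def, Equiv.symm_apply_apply]

theorem cyc_inv {D : Type*} [Finite D] (σ : Perm D) : cyc σ⁻¹ = cyc σ := by
  apply le_antisymm <;> refine natCard_quot_le_of_imp ?_
  · rintro x y rfl
    exact cls_inv (cls_apply σ x).symm
  · rintro x y rfl
    have := cls_inv (cls_apply σ⁻¹ x).symm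
    rwa [inv_inv] at this

theorem sameCycle_of_cls_eq {D : Type*} [Finite D] {σ : Perm D} {x y : D}
    (h : cls σ x = cls σ y) : ∃ n : ℕ, (σ ^ n) x = y := by
  have : (σ.SameCycle x x) = (σ.SameCycle x y) :=
    eq_of_cls_eq h (fun z => σ.SameCycle x z) (fun z => by simp)
  have h2 : σ.SameCycle x y := by rw [← this]
  obtain ⟨n, -, hn⟩ := h2.exists_pow_eq'
  exact ⟨n, hn⟩

/-- Multiplying by a transposition merges two different cycles. -/
theorem cls_mul_swap_of_ne {D : Type*} [Finite D] [DecidableEq D] {σ : Perm D} {a b : D}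
    (h : cls σ a ≠ cls σ b) : cls (σ * swap a b) a = cls (σ * swap a b) b := by
  set σ' := σ * swap a b with hσ'
  have h0 : cls σ' (σ b) = cls σ' a := by
    have : σ' a = σ b := by simp [hσ']
    rw [← this, cls_apply]
  have key : ∀ n : ℕ, cls σ' ((σ ^ n) (σ b)) = cls σ' a := by
    intro n
    induction n with
    | zero => exact h0
    | succ n ih =>
      rw [pow_succ', Perm.mul_apply]
      set y := (σ ^ n) (σ b) with hy
      by_cases hb : y = b
      · rw [hb, h0]
      · have ha : y ≠ a := by
          intro ha
          apply h
          rw [← ha, hy, cls_pow, cls_apply]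
        have : σ' y = σ y := by simp [hσ', swap_apply_of_ne_of_ne ha hb]
        rw [← this, cls_apply, ih]
  obtain ⟨n, hn⟩ := sameCycle_of_cls_eq (cls_apply σ b)
  rw [← key n, hn]

/-- Multiplying by a transposition splits a cycle. -/
theorem cls_mul_swap_of_eq {D : Type*} [Finite D] [DecidableEq D] {σ : Perm D} {a b : D}
    (hab : a ≠ b) (h : cls σ a = cls σ b) : cls (σ * swap a b) a ≠ cls (σ * swap a b) b := by
  classical
  set σ' := σ * swap a b with hσ'
  have hex : ∃ j : ℕ, (σ ^ j) a = b := sameCycle_of_cls_eq h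
  set j := Nat.find hex with hj
  have hjb : (σ ^ j) a = b := Nat.find_spec hex
  have hmin : ∀ i < j, (σ ^ i) a ≠ b := fun i hi => Nat.find_min hex hi
  have hj0 : 0 < j := by
    rcases Nat.eq_zero_or_pos j with h0 | h0
    · rw [h0] at hjb; exact absurd hjb hab
    · exact h0
  have hna : ∀ i, 0 < i → i ≤ j → (σ ^ i) a ≠ a := by
    intro i hi hij hia
    apply hmin (j - i) (by omega)
    have : (σ ^ (j - i)) ((σ ^ i) a) = b := by
      rw [← Perm.mul_apply, ← pow_add, Nat.sub_add_cancel hij, hjb]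
    rwa [hia] at this
  let T : Set D := {x | ∃ i, 0 < i ∧ i ≤ j ∧ (σ ^ i) a = x}
  have hT : ∀ x ∈ T, σ' x ∈ T := by
    rintro x ⟨i, hi, hij, rfl⟩
    rcases hij.lt_or_eq with hlt | rfl
    · refine ⟨i + 1, by omega, hlt, ?_⟩
      rw [hσ', Perm.mul_apply, swap_apply_of_ne_of_ne (hna i hi hij) (hmin i hlt), pow_succ',
        Perm.mul_apply]
    · refine ⟨1, one_pos, hj0, ?_⟩
      rw [hjb]; simp [hσ']
  have hT' : ∀ x, σ' x ∈ T → x ∈ T := by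
    intro x hx
    have himg : Set.image σ' T = T :=
      Set.eq_of_subset_of_ncard_le (by rintro _ ⟨y, hy, rfl⟩; exact hT y hy)
        (Set.ncard_image_of_injective T σ'.injective).ge (Set.toFinite _)
    rw [← himg] at hx
    obtain ⟨y, hy, hyx⟩ := hx
    rwa [σ'.injective hyx] at hy
  intro hc
  have := eq_of_cls_eq hc (fun z => z ∈ T) (fun z => propext ⟨hT' z, hT z⟩)
  have hbT : b ∈ T := ⟨j, hj0, le_rfl, hjb⟩
  rw [← this] at hbT
  obtain ⟨i, hi, hij, hia⟩ := hbT
  exact hna i hi hij hia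

theorem cyc_mul_swap_of_ne {D : Type*} [Finite D] [DecidableEq D] {σ : Perm D} {a b : D}
    (h : cls σ a ≠ cls σ b) : cyc (σ * swap a b) + 1 = cyc σ := by
  rw [cyc, cyc, ← (natCard_quot_add_pair (fun x y => σ x = y) a b).2 h]
  congr 1
  have hs := cls_mul_swap_of_ne h
  set σ' := σ * swap a b with hσ'
  apply le_antisymm <;> refine natCard_quot_le_of_imp ?_
  · rintro x y (rfl | ⟨rfl, rfl⟩)
    · change cls σ' x = cls σ' (σ x)
      by_cases ha : x = a
      · have : σ' b = σ x := by simp [hσ', ha]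
        rw [← this, cls_apply, ha, hs]
      by_cases hb : x = b
      · have : σ' a = σ x := by simp [hσ', hb]
        rw [← this, cls_apply, hb, hs]
      have : σ' x = σ x := by simp [hσ', swap_apply_of_ne_of_ne ha hb]
      rw [← this, cls_apply]
    · exact hs
  · rintro x y rfl
    set r := fun x y => σ x = y ∨ (x = a ∧ y = b)
    have hab : Quot.mk r a = Quot.mk r b := Quot.sound (Or.inr ⟨rfl, rfl⟩)
    have hst : ∀ z, Quot.mk r z = Quot.mk r (σ z) := fun z => Quot.sound (Or.inl rfl)
    rw [hσ', Perm.mul_apply, ← hst]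
    by_cases ha : x = a
    · rw [ha, swap_apply_left, hab]
    by_cases hb : x = b
    · rw [hb, swap_apply_right, hab]
    rw [swap_apply_of_ne_of_ne ha hb]

theorem cyc_mul_swap_of_eq {D : Type*} [Finite D] [DecidableEq D] {σ : Perm D} {a b : D}
    (hab : a ≠ b) (h : cls σ a = cls σ b) : cyc (σ * swap a b) = cyc σ + 1 := by
  have := cyc_mul_swap_of_ne (cls_mul_swap_of_eq hab h)
  rw [mul_assoc, swap_mul_self, mul_one] at this
  omega

/-! ### Planar hypermaps -/

/-- Twice the genus of the hypermap `(σ, α)`, summed over its components: by Euler's formula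
`V - D + E + F = 2 * comps - defect`, where `V`, `E`, `F` count the cycles of `σ`, `α`, `σ * α`. -/
noncomputable def defect {D : Type*} (σ α : Perm D) : ℤ :=
  Nat.card D + 2 * comps σ α - cyc σ - cyc α - cyc (σ * α)

theorem comps_comm {D : Type*} (σ α : Perm D) : comps σ α = comps α σ := by
  unfold comps
  simp only [or_comm]

theorem cyc_conj {D : Type*} [Finite D] (σ τ : Perm D) : cyc (τ * σ * τ⁻¹) = cyc σ := by
  have key : ∀ σ τ : Perm D, cyc σ ≤ cyc (τ * σ * τ⁻¹) := by
    intro σ τ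
    refine natCard_le_quot (fun x => cls σ (τ⁻¹ x)) ?_ ?_
    · rintro ⟨x⟩
      exact ⟨τ x, by simp [cls]⟩
    · rintro x y rfl
      simp [cls_apply]
  refine le_antisymm ?_ (key σ τ)
  have := key (τ * σ * τ⁻¹) τ⁻¹
  simpa [mul_assoc] using this

theorem defect_comm {D : Type*} [Finite D] (σ α : Perm D) : defect σ α = defect α σ := by
  have : cyc (σ * α) = cyc (α * σ) := by
    rw [← cyc_conj (σ * α) α]
    simp [mul_assoc]
  unfold defect
  rw [comps_comm, this]
  ring

/-- Splitting a cycle of `α` does not increase the genus. -/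
theorem defect_mul_swap_le {D : Type*} [Finite D] [DecidableEq D] (σ α : Perm D) {a b : D}
    (hab : a ≠ b) (h : cls α a = cls α b) : defect σ (α * swap a b) ≤ defect σ α := by
  have h1 := cyc_mul_swap_of_eq hab h
  unfold defect
  rw [← mul_assoc]
  by_cases hφ : cls (σ * α) a = cls (σ * α) b
  · have h2 := cyc_mul_swap_of_eq hab hφ
    have h3 : comps σ (α * swap a b) ≤ comps σ α + 1 := by
      refine (natCard_quot_add_pair _ a b).1.trans (Nat.succ_le_succ ?_)
      refine natCard_quot_le_of_imp ?_
      set r := fun x y => (σ x = y ∨ (α * swap a b) x = y) ∨ (x = a ∧ y = b)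
      have hab' : Quot.mk r a = Quot.mk r b := Quot.sound (Or.inr ⟨rfl, rfl⟩)
      have hst : ∀ z, Quot.mk r z = Quot.mk r ((α * swap a b) z) :=
        fun z => Quot.sound (Or.inl (Or.inr rfl))
      rintro x y (rfl | rfl)
      · exact Quot.sound (Or.inl (Or.inl rfl))
      · by_cases ha : x = a
        · have := hst b
          simp only [Perm.mul_apply, swap_apply_right] at this
          rw [ha, ← this, hab']
        by_cases hb : x = b
        · have := hst a
          simp only [Perm.mul_apply, swap_apply_left] at this
          rw [hb, ← this, hab']
        have := hst x
        rwa [Perm.mul_apply, swap_apply_of_ne_of_ne ha hb] at this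
    rw [h1, h2]
    push_cast
    omega
  · have h2 := cyc_mul_swap_of_ne hφ
    have h3 : comps σ (α * swap a b) ≤ comps σ α := by
      refine natCard_quot_le_of_imp ?_
      set r := fun x y => (σ x = y ∨ (α * swap a b) x = y)
      have hst : ∀ z, Quot.mk r z = Quot.mk r ((α * swap a b) z) :=
        fun z => Quot.sound (Or.inr rfl)
      have hst' : ∀ z, Quot.mk r z = Quot.mk r (σ z) := fun z => Quot.sound (Or.inl rfl)
      have hab' : Quot.mk r a = Quot.mk r b := by
        refine eq_of_cls_eq (cls_mul_swap_of_ne hφ) (Quot.mk r) fun z => ?_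
        rw [mul_assoc, Perm.mul_apply, ← hst', ← hst]
      rintro x y (rfl | rfl)
      · exact hst' x
      · by_cases ha : x = a
        · have := hst b
          simp only [Perm.mul_apply, swap_apply_right] at this
          rw [ha, ← this, hab']
        by_cases hb : x = b
        · have := hst a
          simp only [Perm.mul_apply, swap_apply_left] at this
          rw [hb, ← this, hab']
        have := hst x
        rwa [Perm.mul_apply, swap_apply_of_ne_of_ne ha hb] at this
    rw [h1]
    push_cast
    omega

/-- For an involution `α`, exchanging vertices and faces does not change the genus. -/
theorem defect_dual {D : Type*} [Finite D] (σ α : Perm D) (hα : α * α = 1) :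
    defect (σ * α) α = defect σ α := by
  have h1 : σ * α * α = σ := by rw [mul_assoc, hα, mul_one]
  have key : ∀ σ : Perm D, comps (σ * α) α ≤ comps σ α := by
    intro σ
    refine natCard_quot_le_of_imp ?_
    set r := fun x y => (σ * α) x = y ∨ α x = y
    have hst : ∀ z, Quot.mk r z = Quot.mk r (α z) := fun z => Quot.sound (Or.inr rfl)
    have hst' : ∀ z, Quot.mk r z = Quot.mk r ((σ * α) z) := fun z => Quot.sound (Or.inl rfl)
    rintro x y (rfl | rfl)
    · have := hst' (α x)
      have h2 : α (α x) = x := by rw [← Perm.mul_apply, hα, Perm.one_apply]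
      rw [Perm.mul_apply, h2] at this
      rw [← this, ← hst]
    · exact hst x
  have h2 : comps (σ * α) α = comps σ α := by
    refine le_antisymm (key σ) ?_
    have := key (σ * α)
    rwa [h1] at this
  unfold defect
  rw [h1, h2]
  ring

/-! ### Contracting edges and deleting darts -/

theorem cls_merge {D : Type*} [Finite D] [DecidableEq D] {σ : Perm D} {a b : D}
    (h : cls σ a ≠ cls σ b) (x : D) : cls (σ * swap a b) (σ x) = cls (σ * swap a b) x := by
  have hs := cls_mul_swap_of_ne h
  set σ' := σ * swap a b with hσ'
  by_cases ha : x = a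
  · have : σ' b = σ x := by simp [hσ', ha]
    rw [← this, cls_apply, ha, hs]
  by_cases hb : x = b
  · have : σ' a = σ x := by simp [hσ', hb]
    rw [← this, cls_apply, hb, hs]
  have : σ' x = σ x := by simp [hσ', swap_apply_of_ne_of_ne ha hb]
  rw [← this, cls_apply]

/-- In a planar map whose vertices are grouped by a labelling `ℓ`, each group being connected
through edges inside the group, every group can be contracted to a single vertex; the edges
between different groups stay as they are. -/
theorem exists_contract {D L : Type*} [Finite D] (ℓ : D → L) (n : ℕ) : ∀ (σ α : Perm D),
    cyc σ = n → α * α = 1 → defect σ α ≤ 0 → (∀ x, ℓ (σ x) = ℓ x) →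
    (∀ x y, ℓ x = ℓ y → Quot.mk (fun x y => σ x = y ∨ (α x = y ∧ ℓ x = ℓ y)) x =
      Quot.mk (fun x y => σ x = y ∨ (α x = y ∧ ℓ x = ℓ y)) y) →
    ∃ σ' α' : Perm D, α' * α' = 1 ∧ defect σ' α' ≤ 0 ∧ (∀ x, ℓ (σ' x) = ℓ x) ∧
      (∀ x y, ℓ x = ℓ y → cls σ' x = cls σ' y) ∧ ∀ x, ℓ (α x) ≠ ℓ x → α' x = α x := by
  classical
  induction n with
  | zero =>
    intro σ α h0 hα hd hσ hc
    refine ⟨σ, α, hα, hd, hσ, fun x y _ => ?_, fun x _ => rfl⟩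
    rw [cyc, Nat.card_eq_zero] at h0
    rcases h0 with h0 | h0
    · exact (h0.false (Quot.mk _ x)).elim
    · exact absurd (inferInstance : Finite _) (not_finite_iff_infinite.2 h0)
  | succ n ih =>
    intro σ α hn hα hd hσ hc
    -- An edge `d` joining two different vertices of one group is contracted: both `σ` and `α` are
    -- multiplied by `swap d (α d)`, which merges the two vertices and leaves the faces unchanged.
    by_cases hex : ∃ d, ℓ (α d) = ℓ d ∧ cls σ d ≠ cls σ (α d)
    · obtain ⟨d, hd1, hd2⟩ := hex
      have hαα : ∀ x, α (α x) = x := fun x => by rw [← Perm.mul_apply, hα, Perm.one_apply]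
      have hne : d ≠ α d := fun h => hd2 (by rw [← h])
      have hcomm : swap d (α d) * α = α * swap d (α d) := by
        have := Equiv.mul_swap_eq_swap_mul α d (α d)
        rw [this, hαα, swap_comm]
      have hα' : (α * swap d (α d)) * (α * swap d (α d)) = 1 := by
        calc _ = α * (swap d (α d) * α) * swap d (α d) := by simp only [mul_assoc]
          _ = (α * α) * (swap d (α d) * swap d (α d)) := by rw [hcomm]; simp only [mul_assoc]
          _ = 1 := by rw [hα, swap_mul_self, one_mul]
      have hφ : (σ * swap d (α d)) * (α * swap d (α d)) = σ * α := by
        calc _ = σ * (swap d (α d) * α) * swap d (α d) := by simp only [mul_assoc]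
          _ = (σ * α) * (swap d (α d) * swap d (α d)) := by rw [hcomm]; simp only [mul_assoc]
          _ = _ := by rw [swap_mul_self, mul_one]
      have hm := cls_merge hd2
      have hs := cls_mul_swap_of_ne hd2
      have hcyc := cyc_mul_swap_of_ne hd2
      have hα'x : ∀ x, x ≠ d → x ≠ α d → (α * swap d (α d)) x = α x := fun x h1 h2 => by
        rw [Perm.mul_apply, swap_apply_of_ne_of_ne h1 h2]
      have hdef : defect (σ * swap d (α d)) (α * swap d (α d)) ≤ 0 := by
        rw [← defect_dual _ _ hα', hφ]
        refine (defect_mul_swap_le _ _ hne (cls_apply α d).symm).trans ?_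
        rwa [defect_dual _ _ hα]
      have hℓs : ∀ x, ℓ (swap d (α d) x) = ℓ x := by
        intro x
        by_cases h1 : x = d
        · rw [h1, swap_apply_left, hd1]
        by_cases h2 : x = α d
        · rw [h2, swap_apply_right, hd1]
        rw [swap_apply_of_ne_of_ne h1 h2]
      obtain ⟨σ', α', k1, k2, k3, k4, k5⟩ := ih (σ * swap d (α d)) (α * swap d (α d)) (by omega) hα'
        hdef (fun x => by rw [Perm.mul_apply, hσ, hℓs]) (by
          intro x y hxy
          set r' := (fun x y => (σ * swap d (α d)) x = y ∨ ((α * swap d (α d)) x = y ∧ ℓ x = ℓ y))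
          have hcl : ∀ x y, cls (σ * swap d (α d)) x = cls (σ * swap d (α d)) y →
              Quot.mk r' x = Quot.mk r' y := fun x y h =>
            eq_of_cls_eq h (Quot.mk r') fun z => (Quot.sound (r := r') (Or.inl rfl)).symm
          refine congrArg (Quot.lift (Quot.mk r') ?_) (hc x y hxy)
          rintro a b (rfl | ⟨rfl, hab⟩)
          · exact hcl _ _ (hm a).symm
          · by_cases h1 : a = d
            · rw [h1]; exact hcl _ _ hs
            by_cases h2 : a = α d
            · rw [h2, hαα]; exact hcl _ _ hs.symm
            exact Quot.sound (Or.inr ⟨hα'x a h1 h2, hab⟩))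
      refine ⟨σ', α', k1, k2, k3, k4, fun x hx => ?_⟩
      have h1 : x ≠ d := by rintro rfl; exact hx hd1
      have h2 : x ≠ α d := by rintro rfl; exact hx (by rw [hαα, hd1])
      rw [k5 x (by rwa [hα'x x h1 h2]), hα'x x h1 h2]
    · push Not at hex
      refine ⟨σ, α, hα, hd, hσ, fun x y hxy => ?_, fun x _ => rfl⟩
      refine congrArg (Quot.lift (cls σ) ?_) (hc x y hxy)
      rintro a b (rfl | ⟨rfl, hab⟩)
      · exact (cls_apply σ a).symm
      · exact hex a hab.symm

/-- Every point outside `S` can be made a fixed point of `σ`, replacing `σ` by its first-return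
map to `S`; the genus does not increase. -/
theorem exists_erase {D : Type*} [Finite D] (S : Set D) (α : Perm D) (n : ℕ) : ∀ σ : Perm D,
    {p | p ∉ S ∧ σ p ≠ p}.ncard ≤ n →
    ∃ σ' : Perm D, defect σ' α ≤ defect σ α ∧ (∀ x, x ∉ S → σ' x = x) ∧
      (∀ x, x ∈ S → σ x ∈ S → σ' x = σ x) ∧
      (∀ x, x ∈ S → σ x ∉ S → σ (σ x) ∈ S → σ' x = σ (σ x)) ∧
      (∀ x y, x ∈ S → y ∈ S → cls σ x = cls σ y → cls σ' x = cls σ' y) ∧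
      (∀ x, cls σ (σ' x) = cls σ x) := by
  classical
  induction n with
  | zero =>
    intro σ h0
    rw [Nat.le_zero, Set.ncard_eq_zero (Set.toFinite _)] at h0
    have h0' : ∀ x, x ∉ S → σ x = x := by
      intro x hx
      by_contra h
      have : x ∈ {p | p ∉ S ∧ σ p ≠ p} := ⟨hx, h⟩
      rw [h0] at this
      exact this
    refine ⟨σ, le_rfl, h0', fun _ _ _ => rfl, fun x hx h1 h2 => ?_,
      fun _ _ _ _ h => h, cls_apply σ⟩
    rw [h0' _ h1] at h2
    exact absurd h2 h1
  | succ n ih =>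
    intro σ hn
    rcases Set.eq_empty_or_nonempty {p | p ∉ S ∧ σ p ≠ p} with hemp | ⟨p, hpS, hp⟩
    · exact ih σ (by rw [hemp, Set.ncard_empty]; omega)
    obtain ⟨q, rfl⟩ := σ.surjective p
    have hne : q ≠ σ q := fun h => hp (by rw [← h, ← h])
    set σ₂ := σ * swap q (σ q) with hσ₂
    have e1 : σ₂ q = σ (σ q) := by simp [hσ₂]
    have e2 : σ₂ (σ q) = σ q := by simp [hσ₂]
    have e3 : ∀ x, x ≠ σ q → σ x ≠ σ q → σ₂ x = σ x := by
      intro x h1 h2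
      rw [hσ₂, Perm.mul_apply, swap_apply_of_ne_of_ne (fun h => h2 (by rw [h])) h1]
    have hd : defect σ₂ α ≤ defect σ α := by
      rw [defect_comm σ₂, defect_comm σ]
      exact defect_mul_swap_le _ _ hne (cls_apply σ q).symm
    have hset : {p | p ∉ S ∧ σ₂ p ≠ p} ⊆ {p | p ∉ S ∧ σ p ≠ p} \ {σ q} := by
      rintro x ⟨hx, hx2⟩
      have h1 : x ≠ σ q := by rintro rfl; exact hx2 e2
      refine ⟨⟨hx, ?_⟩, h1⟩
      by_cases h2 : σ x = σ q
      · rw [h2]; exact h1.symm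
      · rwa [e3 x h1 h2] at hx2
    have hcard : {p | p ∉ S ∧ σ₂ p ≠ p}.ncard ≤ n := by
      refine (Set.ncard_le_ncard hset (Set.toFinite _)).trans ?_
      have := Set.ncard_sdiff_singleton_add_one (s := {p | p ∉ S ∧ σ p ≠ p}) ⟨hpS, hp⟩
        (Set.toFinite _)
      omega
    obtain ⟨σ', k1, k2, k3, k4, k5, k6⟩ := ih σ₂ hcard
    have hSne : ∀ x, x ∈ S → x ≠ σ q := fun x hx h => hpS (h ▸ hx)
    refine ⟨σ', k1.trans hd, k2, fun x hx h => ?_, fun x hx h1 h2 => ?_, fun x y hx hy h => ?_,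
      fun x => ?_⟩
    · have := e3 x (hSne x hx) (hSne _ h)
      rw [← this]
      exact k3 x hx (by rwa [this])
    · by_cases hxq : σ x = σ q
      · have hxq' := σ.injective hxq
        subst hxq'
        rw [← e1]
        exact k3 x hx (by rwa [e1])
      · have a1 := e3 x (hSne x hx) hxq
        have a2 := e3 (σ x) hxq (hSne _ h2)
        rw [← a2, ← a1]
        exact k4 x hx (by rwa [a1]) (by rwa [a1, a2])
    · refine k5 x y hx hy ?_
      have := eq_of_cls_eq h (fun z => if z = σ q then cls σ₂ (σ (σ q)) else cls σ₂ z) (by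
        intro z
        by_cases h1 : z = σ q
        · simp [h1, hp]
        by_cases h2 : σ z = σ q
        · have := σ.injective h2
          subst this
          simp only [if_true, h1, if_false]
          rw [← e1, cls_apply]
        · simp only [h1, h2, if_false]
          rw [← e3 z h1 h2, cls_apply])
      simpa [hSne x hx, hSne y hy] using this
    · refine eq_of_cls_eq (σ := σ₂) ?_ (cls σ) ?_
      · exact k6 x
      · intro z
        rw [hσ₂, Perm.mul_apply, cls_apply]
        by_cases h1 : z = q
        · rw [h1, swap_apply_left, cls_apply]
        by_cases h2 : z = σ q
        · rw [h2, swap_apply_right, cls_apply]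
        rw [swap_apply_of_ne_of_ne h1 h2]

theorem exists_restrict {D J : Type*} [Finite D] (e : J → D) (he : Function.Injective e)
    (σ : Perm D) (h : ∀ x, x ∉ Set.range e → σ x = x) : ∃ σJ : Perm J, ∀ x, e (σJ x) = σ (e x) := by
  have : Finite J := Finite.of_injective e he
  have hr : ∀ x, ∃ y, e y = σ (e x) := by
    intro x
    by_contra hc
    have := σ.injective (h _ hc)
    exact hc ⟨x, this.symm⟩
  choose f hf using hr
  have hinj : Function.Injective f := by
    intro x y hxy
    apply he
    apply σ.injective
    rw [← hf, ← hf, hxy]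
  exact ⟨Equiv.ofBijective f (Finite.injective_iff_bijective.1 hinj), hf⟩

theorem cyc_restrict_le {D J : Type*} [Finite D] (e : J → D) (he : Function.Injective e)
    (σ : Perm D) (σJ : Perm J) (h : ∀ x, e (σJ x) = σ (e x)) :
    cyc σ ≤ cyc σJ + Nat.card {x // x ∉ Set.range e} := by
  have : Finite J := Finite.of_injective e he
  rw [cyc, cyc, ← Nat.card_sum]
  refine Nat.card_le_card_of_surjective
    (Sum.elim (Quot.lift (fun x => cls σ (e x)) ?_) (fun x => cls σ x.1)) ?_
  · rintro a b rfl
    rw [h, cls_apply]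
  · rintro ⟨x⟩
    by_cases hx : x ∈ Set.range e
    · obtain ⟨y, rfl⟩ := hx
      exact ⟨Sum.inl (Quot.mk _ y), rfl⟩
    · exact ⟨Sum.inr ⟨x, hx⟩, rfl⟩

theorem defect_restrict_le {D J : Type*} [Finite D] (e : J → D) (he : Function.Injective e)
    (σ α : Perm D) (σJ αJ : Perm J) (h : ∀ x, e (σJ x) = σ (e x)) (h' : ∀ x, e (αJ x) = α (e x))
    (hσ : ∀ x, x ∉ Set.range e → σ x = x) (hα : ∀ x, x ∉ Set.range e → α x = x) :
    defect σJ αJ ≤ defect σ α := by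
  classical
  have : Finite J := Finite.of_injective e he
  have h1 := cyc_restrict_le e he σ σJ h
  have h2 := cyc_restrict_le e he α αJ h'
  have h3 := cyc_restrict_le e he (σ * α) (σJ * αJ) (by simp [h, h'])
  have h4 : Nat.card D = Nat.card J + Nat.card {x // x ∉ Set.range e} := by
    rw [Nat.card_congr (Equiv.ofInjective e he), ← Nat.card_sum]
    exact Nat.card_congr (Equiv.Set.sumCompl (Set.range e)).symm
  have h5 : comps σJ αJ + Nat.card {x // x ∉ Set.range e} ≤ comps σ α := by
    rw [comps, ← Nat.card_sum]
    let r := fun x y => σJ x = y ∨ αJ x = y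
    let f : D → Quot r ⊕ {x // x ∉ Set.range e} := fun x =>
      if hx : x ∈ Set.range e then Sum.inl (Quot.mk r hx.choose) else Sum.inr ⟨x, hx⟩
    have fe : ∀ y, f (e y) = Sum.inl (Quot.mk r y) := by
      intro y
      have hy : e y ∈ Set.range e := ⟨y, rfl⟩
      simp only [f, dif_pos hy]
      rw [he hy.choose_spec]
    refine natCard_le_quot f ?_ ?_
    · rintro (q | ⟨x, hx⟩)
      · induction q using Quot.ind with
        | mk y => exact ⟨e y, fe y⟩
      · exact ⟨x, by simp only [f, dif_neg hx]⟩
    · rintro x y hxy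
      by_cases hx : x ∈ Set.range e
      · obtain ⟨z, rfl⟩ := hx
        rcases hxy with rfl | rfl
        · rw [← h, fe, fe]
          exact congrArg Sum.inl (Quot.sound (Or.inl rfl))
        · rw [← h', fe, fe]
          exact congrArg Sum.inl (Quot.sound (Or.inr rfl))
      · rcases hxy with rfl | rfl
        · rw [hσ x hx]
        · rw [hα x hx]
  unfold defect
  omega

/-- Deleting the darts outside the range of `e`, a set of darts closed under `α`. -/
theorem exists_delete {D J : Type*} [Finite D] (e : J → D) (he : Function.Injective e)
    (σ α : Perm D) (hα : ∀ x, ∃ y, e y = α (e x)) (hd : defect σ α ≤ 0) :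
    ∃ σJ αJ : Perm J, defect σJ αJ ≤ 0 ∧ (∀ x, e (αJ x) = α (e x)) ∧
      (∀ x y, σ (e x) = e y → σJ x = y) ∧
      (∀ x y, σ (e x) ∉ Set.range e → σ (σ (e x)) = e y → σJ x = y) ∧
      (∀ x y, cls σ (e x) = cls σ (e y) → cls σJ x = cls σJ y) ∧
      (∀ x, cls σ (e (σJ x)) = cls σ (e x)) := by
  obtain ⟨σ', a1, a2, a3, a4, a5, a6⟩ := exists_erase (Set.range e) α _ σ le_rfl
  obtain ⟨α', b1, b2, b3, -⟩ := exists_erase (Set.range e) σ' _ α le_rfl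
  obtain ⟨σJ, hσJ⟩ := exists_restrict e he σ' a2
  obtain ⟨αJ, hαJ⟩ := exists_restrict e he α' b2
  have hdef := defect_restrict_le e he σ' α' σJ αJ hσJ hαJ a2 b2
  rw [defect_comm α' σ', defect_comm α σ'] at b1
  refine ⟨σJ, αJ, by omega, fun x => ?_, fun x y h => ?_, fun x y h1 h2 => ?_, fun x y h => ?_,
    fun x => ?_⟩
  · rw [hαJ]
    exact b3 _ ⟨x, rfl⟩ (hα x)
  · apply he
    rw [hσJ, a3 _ ⟨x, rfl⟩ ⟨y, h.symm⟩, h]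
  · apply he
    rw [hσJ, a4 _ ⟨x, rfl⟩ h1 ⟨y, h2.symm⟩, h2]
  · have hc := a5 _ _ ⟨x, rfl⟩ ⟨y, rfl⟩ h
    obtain ⟨n, hn⟩ := sameCycle_of_cls_eq hc
    have key : ∀ n : ℕ, e ((σJ ^ n) x) = (σ' ^ n) (e x) := by
      intro n
      induction n with
      | zero => rfl
      | succ n ih => rw [pow_succ', pow_succ', Perm.mul_apply, Perm.mul_apply, hσJ, ih]
    rw [← key] at hn
    rw [← he hn, cls_pow]
  · rw [hσJ]
    exact a6 _

/-! ### The planar grid -/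

theorem ncard_le_quot {D M : Type*} [Finite D] {r : D → D → Prop} (f : D → M)
    (h : ∀ x y, r x y → f x = f y) (T : Set M) (hT : T ⊆ Set.range f) :
    T.ncard ≤ Nat.card (Quot r) := by
  have h1 : T.ncard ≤ (Set.range f).ncard := Set.ncard_le_ncard hT (Set.finite_range f)
  refine h1.trans ?_
  rw [← Nat.card_coe_set_eq]
  exact natCard_le_quot (Set.rangeFactorization f) Set.rangeFactorization_surjective
    (fun x y hxy => Subtype.ext (h x y hxy))

/-- The four unit steps of the square grid, in counterclockwise order. -/
def dir : Fin 4 → ℤ × ℤ := ![(1, 0), (0, 1), (-1, 0), (0, -1)]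

/-- The `N × N` box of grid cells. -/
def box (N : ℕ) : Set (ℤ × ℤ) := Set.Ico 0 (N : ℤ) ×ˢ Set.Ico 0 (N : ℤ)

theorem mem_box {N : ℕ} {p : ℤ × ℤ} :
    p ∈ box N ↔ (0 ≤ p.1 ∧ p.1 < N) ∧ (0 ≤ p.2 ∧ p.2 < N) := by
  simp [box, Set.mem_prod, Set.mem_Ico]

instance (N : ℕ) : Finite (box N) :=
  ((Set.finite_Ico (0 : ℤ) N).prod (Set.finite_Ico (0 : ℤ) N)).to_subtype

/-- The darts of the grid map: a cell together with a direction. -/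
abbrev GD (N : ℕ) := box N × Fin 4

open Classical in
/-- The edge involution of the grid map; darts leaving the box are fixed. -/
noncomputable def gridStep {N : ℕ} (d : GD N) : GD N :=
  if h : d.1.1 + dir d.2 ∈ box N then (⟨d.1.1 + dir d.2, h⟩, d.2 + 2) else d

theorem dir_add_two (i : Fin 4) : dir (i + 2) = - dir i := by
  fin_cases i <;> simp [dir]

theorem gridStep_of_mem {N : ℕ} {d : GD N} (h : d.1.1 + dir d.2 ∈ box N) :
    gridStep d = (⟨d.1.1 + dir d.2, h⟩, d.2 + 2) := dif_pos h

theorem gridStep_of_not_mem {N : ℕ} {d : GD N} (h : d.1.1 + dir d.2 ∉ box N) :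
    gridStep d = d := dif_neg h

theorem gridStep_invol {N : ℕ} : Function.Involutive (gridStep (N := N)) := by
  intro d
  by_cases h : d.1.1 + dir d.2 ∈ box N
  · rw [gridStep_of_mem h, gridStep_of_mem]
    · obtain ⟨⟨p, hp⟩, i⟩ := d
      have : i + 2 + 2 = i := by fin_cases i <;> rfl
      simp [dir_add_two, this]
    · simp [dir_add_two, d.1.2]
  · rw [gridStep_of_not_mem h, gridStep_of_not_mem h]

/-- The edge involution of the grid map, as a permutation. -/
noncomputable def gα (N : ℕ) : Perm (GD N) := gridStep_invol.toPerm

/-- The vertex rotation of the grid map. -/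
def gσ (N : ℕ) : Perm (GD N) := Equiv.prodCongr (Equiv.refl _) (Equiv.addRight 1)

theorem gα_apply {N : ℕ} (d : GD N) : gα N d = gridStep d := rfl

theorem gσ_apply {N : ℕ} (d : GD N) : gσ N d = (d.1, d.2 + 1) := rfl

theorem gα_mul_self (N : ℕ) : gα N * gα N = 1 := by
  ext1 d
  exact gridStep_invol d

theorem cls_gσ {N : ℕ} (p : box N) (i j : Fin 4) : cls (gσ N) (p, i) = cls (gσ N) (p, j) := by
  have h : ∀ i, cls (gσ N) (p, i) = cls (gσ N) (p, 0) := by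
    have e : ∀ i : Fin 4, cls (gσ N) (p, i + 1) = cls (gσ N) (p, i) := fun i =>
      cls_apply (gσ N) (p, i)
    intro i
    fin_cases i
    · rfl
    · exact e 0
    · exact (e 1).trans (e 0)
    · exact (e 2).trans ((e 1).trans (e 0))
  rw [h i, h j]

theorem ncard_int_prod (a b : ℕ) :
    (Set.Ico 0 (a : ℤ) ×ˢ Set.Ico 0 (b : ℤ)).ncard = a * b := by
  rw [Set.ncard_prod, ← Finset.coe_Ico, ← Finset.coe_Ico, Set.ncard_coe_finset,
    Set.ncard_coe_finset]
  simp

theorem gσ_cyc (N : ℕ) : N * N ≤ cyc (gσ N) := by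
  rw [← ncard_int_prod]
  refine ncard_le_quot (fun d => d.1.1) ?_ _ ?_
  · rintro x y rfl
    rfl
  · intro p hp
    exact ⟨(⟨p, hp⟩, 0), rfl⟩

/-- The grid edge on which a dart lies: horizontal edges on the left, vertical ones on the
right. -/
def edgeLabel (p : ℤ × ℤ) : Fin 4 → (ℤ × ℤ) ⊕ (ℤ × ℤ) :=
  ![Sum.inl (p.1 + 1, p.2), Sum.inr (p.1, p.2 + 1), Sum.inl p, Sum.inr p]

theorem gα_cyc (N : ℕ) : 2 * (N * (N + 1)) ≤ cyc (gα N) := by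
  have h1 : (Sum.inl (β := ℤ × ℤ) '' (Set.Ico 0 ((N + 1 : ℕ) : ℤ) ×ˢ Set.Ico 0 (N : ℤ)) ∪
      Sum.inr '' (Set.Ico 0 (N : ℤ) ×ˢ Set.Ico 0 ((N + 1 : ℕ) : ℤ))).ncard = 2 * (N * (N + 1)) := by
    rw [Set.ncard_union_eq, Set.ncard_image_of_injective _ Sum.inl_injective,
      Set.ncard_image_of_injective _ Sum.inr_injective, ncard_int_prod, ncard_int_prod]
    · ring
    · rw [Set.disjoint_left]
      rintro _ ⟨a, -, rfl⟩ ⟨b, -, h⟩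
      cases h
  rw [← h1]
  refine ncard_le_quot (fun d => edgeLabel d.1.1 d.2) ?_ _ ?_
  · rintro x y rfl
    rw [gα_apply]
    by_cases h : x.1.1 + dir x.2 ∈ box N
    · rw [gridStep_of_mem h]
      obtain ⟨⟨⟨a, b⟩, hp⟩, i⟩ := x
      fin_cases i <;> simp [edgeLabel, dir]
    · rw [gridStep_of_not_mem h]
  · rintro _ (⟨⟨a, b⟩, hp, rfl⟩ | ⟨⟨a, b⟩, hp, rfl⟩)
    · simp only [Set.mem_prod, Set.mem_Ico] at hp
      by_cases ha : a < N
      · exact ⟨(⟨(a, b), mem_box.2 ⟨⟨hp.1.1, ha⟩, hp.2⟩⟩, 2), rfl⟩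
      · refine ⟨(⟨(a - 1, b), mem_box.2 ?_⟩, 0), ?_⟩
        · push_cast at hp
          have := hp.2
          dsimp only
          omega
        · simp [edgeLabel]
    · simp only [Set.mem_prod, Set.mem_Ico] at hp
      by_cases ha : b < N
      · exact ⟨(⟨(a, b), mem_box.2 ⟨hp.1, ⟨hp.2.1, ha⟩⟩⟩, 3), rfl⟩
      · refine ⟨(⟨(a, b - 1), mem_box.2 ?_⟩, 1), ?_⟩
        · push_cast at hp
          have := hp.1
          dsimp only
          omega
        · simp [edgeLabel]

/-- The lower left corner of the unit square to the right of a dart. -/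
def sqr (p : ℤ × ℤ) : Fin 4 → ℤ × ℤ :=
  ![(p.1, p.2 - 1), p, (p.1 - 1, p.2), (p.1 - 1, p.2 - 1)]

open Classical in
theorem gφ_cyc (N : ℕ) : N * N + 1 ≤ cyc (gσ (N + 1) * gα (N + 1)) := by
  have h1 : (insert none (some '' (Set.Ico 0 (N : ℤ) ×ˢ Set.Ico 0 (N : ℤ)))).ncard
      = N * N + 1 := by
    rw [Set.ncard_insert_of_notMem, Set.ncard_image_of_injective _ (Option.some_injective _),
      ncard_int_prod]
    · simp
  rw [← h1]
  refine ncard_le_quot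
    (fun d => if sqr d.1.1 d.2 ∈ box N then some (sqr d.1.1 d.2) else none) ?_ _ ?_
  · rintro x y rfl
    rw [Perm.mul_apply, gα_apply, gσ_apply]
    by_cases h : x.1.1 + dir x.2 ∈ box (N + 1)
    · rw [gridStep_of_mem h]
      obtain ⟨⟨⟨a, b⟩, hp⟩, i⟩ := x
      have : sqr (a, b) i = sqr ((a, b) + dir i) (i + 2 + 1) := by
        fin_cases i <;> simp [sqr, dir]
        all_goals rfl
      simp only [this]
    · rw [gridStep_of_not_mem h]
      obtain ⟨⟨⟨a, b⟩, hp⟩, i⟩ := x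
      have h1 : sqr (a, b) i ∉ box N := by
        rw [mem_box] at *
        fin_cases i <;> simp [sqr, dir] at * <;> omega
      have h2 : sqr (a, b) (i + 1) ∉ box N := by
        rw [mem_box] at *
        fin_cases i <;> simp [sqr, dir] at * <;> omega
      simp only [if_neg h1, if_neg h2]
  · rintro _ (rfl | ⟨p, hp, rfl⟩)
    · refine ⟨(⟨(0, 0), mem_box.2 (by simp)⟩, 3), ?_⟩
      refine if_neg ?_
      rw [mem_box]
      simp [sqr]
    · have hp' : p ∈ box N := hp
      refine ⟨(⟨p, mem_box.2 ?_⟩, 1), ?_⟩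
      · rw [mem_box] at hp'
        push_cast
        omega
      · exact if_pos hp'

theorem grid_comps (N : ℕ) : comps (gσ N) (gα N) ≤ 1 := by
  set r := fun x y => gσ N x = y ∨ gα N x = y with hr
  have hσ : ∀ (p : box N) i j, Quot.mk r (p, i) = Quot.mk r (p, j) := fun p i j =>
    eq_of_cls_eq (cls_gσ p i j) (Quot.mk r) fun z => (Quot.sound (r := r) (Or.inl rfl)).symm
  have hα : ∀ (p : box N) i (h : p.1 + dir i ∈ box N),
      Quot.mk r (p, i) = Quot.mk r (⟨p.1 + dir i, h⟩, i + 2) := by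
    intro p i h
    refine Quot.sound (Or.inr ?_)
    rw [gα_apply, gridStep_of_mem h]
  have hx : ∀ (n : ℕ) (b : ℤ) (h : ((n : ℤ), b) ∈ box N) (h' : (0, b) ∈ box N) (i : Fin 4),
      Quot.mk r (⟨(n, b), h⟩, i) = Quot.mk r (⟨(0, b), h'⟩, 0) := by
    intro n
    induction n with
    | zero => intro b h h' i; exact hσ _ _ _
    | succ n ih =>
      intro b h h' i
      have h2 : ((n : ℤ), b) ∈ box N := by
        rw [mem_box] at *; push_cast at h; dsimp only at *; omega
      rw [← ih b h2 h' 0, hσ _ i 2, hα ⟨(n, b), h2⟩ 0 (by simpa [dir] using h)]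
      simp [dir]
  have hy : ∀ (n : ℕ) (h : (0, (n : ℤ)) ∈ box N) (h' : (0, 0) ∈ box N) (i : Fin 4),
      Quot.mk r (⟨(0, n), h⟩, i) = Quot.mk r (⟨(0, 0), h'⟩, 0) := by
    intro n
    induction n with
    | zero => intro h h' i; exact hσ _ _ _
    | succ n ih =>
      intro h h' i
      have h2 : (0, (n : ℤ)) ∈ box N := by
        rw [mem_box] at *; push_cast at h; dsimp only at *; omega
      rw [← ih h2 h' 0, hσ _ i 3, hσ _ 0 1, hα ⟨(0, n), h2⟩ 1 (by simpa [dir] using h)]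
      simp [dir]
  have hall : ∀ x : GD N, ∀ h' : (0, 0) ∈ box N, Quot.mk r x = Quot.mk r (⟨(0, 0), h'⟩, 0) := by
    rintro ⟨⟨⟨a, b⟩, hp⟩, i⟩ h'
    have hp' := mem_box.1 hp
    dsimp only at hp'
    lift a to ℕ using hp'.1.1
    lift b to ℕ using hp'.2.1
    have h2 : (0, (b : ℤ)) ∈ box N := mem_box.2 (by dsimp only; omega)
    rw [hx a b hp h2 i, hy b h2 h']
  have : Subsingleton (Quot r) := by
    constructor
    rintro ⟨x⟩ ⟨y⟩
    have h' : (0, 0) ∈ box N := by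
      have := mem_box.1 x.1.2
      rw [mem_box]; dsimp only; omega
    exact (hall x h').trans (hall y h').symm
  exact Finite.card_le_one_iff_subsingleton.2 this

/-- The grid map satisfies Euler's formula for planar maps, by the counts above. -/
theorem grid_planar (N : ℕ) : defect (gσ (N + 1)) (gα (N + 1)) ≤ 0 := by
  have h1 := gσ_cyc (N + 1)
  have h2 := gα_cyc (N + 1)
  have h3 := gφ_cyc N
  have h4 := grid_comps (N + 1)
  have h5 : Nat.card (GD (N + 1)) = (N + 1) * (N + 1) * 4 := by
    rw [Nat.card_prod, Nat.card_coe_set_eq, box, ncard_int_prod]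
    simp
  unfold defect
  rw [h5]
  zify at *
  nlinarith

/-! ### Hypermaps as minors of the grid -/

/-- Connectivity of a set of cells, with respect to sharing a side. -/
def CellConn (C : Set (ℤ × ℤ)) : Prop :=
  ∀ p ∈ C, ∀ q ∈ C, Relation.ReflTransGen (fun a b => a ∈ C ∧ b ∈ C ∧ ∃ i, b = a + dir i) p q

theorem sum_perm_split {I : Type*} [Finite I] (σ : Perm (I ⊕ I))
    (h1 : ∀ i, ∃ j, σ (Sum.inl i) = Sum.inl j) (h2 : ∀ i, ∃ j, σ (Sum.inr i) = Sum.inr j) :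
    ∃ s c : Perm I, ∀ i, σ (Sum.inl i) = Sum.inl (s i) ∧ σ (Sum.inr i) = Sum.inr (c i) := by
  choose f hf using h1
  choose g hg using h2
  have hf' : Function.Injective f := fun i j h => Sum.inl_injective (σ.injective (by rw [hf, hf, h]))
  have hg' : Function.Injective g := fun i j h => Sum.inr_injective (σ.injective (by rw [hg, hg, h]))
  exact ⟨Equiv.ofBijective f (Finite.injective_iff_bijective.1 hf'),
    Equiv.ofBijective g (Finite.injective_iff_bijective.1 hg'), fun i => ⟨hf i, hg i⟩⟩

/-- A bipartite map, whose edges join a vertex of the first kind (rotation `s`) to one of the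
second kind (rotation `c`), is the same thing as the hypermap `(s, c)` on its edges. -/
theorem defect_bipartite {I : Type*} [Finite I] (σ α : Perm (I ⊕ I)) (s c : Perm I)
    (h : ∀ i, σ (Sum.inl i) = Sum.inl (s i) ∧ σ (Sum.inr i) = Sum.inr (c i))
    (hα : ∀ i, α (Sum.inl i) = Sum.inr i ∧ α (Sum.inr i) = Sum.inl i) :
    defect s c = defect σ α := by
  have h1 : cyc σ = cyc s + cyc c := by
    rw [cyc, cyc, cyc, ← Nat.card_sum]
    refine Nat.card_congr
      { toFun := Quot.lift (Sum.elim (fun i => Sum.inl (cls s i)) (fun i => Sum.inr (cls c i))) ?_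
        invFun := Sum.elim (Quot.lift (fun i => cls σ (Sum.inl i)) ?_)
          (Quot.lift (fun i => cls σ (Sum.inr i)) ?_)
        left_inv := ?_
        right_inv := ?_ }
    · rintro (i | i) _ rfl
      · simp [h, cls_apply]
      · simp [h, cls_apply]
    · rintro i _ rfl
      rw [← (h i).1, cls_apply]
    · rintro i _ rfl
      rw [← (h i).2, cls_apply]
    · rintro ⟨i | i⟩ <;> rfl
    · rintro (⟨⟨i⟩⟩ | ⟨⟨i⟩⟩) <;> rfl
  have h2 : cyc α = Nat.card I := by
    refine Nat.card_congr
      { toFun := Quot.lift (Sum.elim id id) ?_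
        invFun := fun i => cls α (Sum.inl i)
        left_inv := ?_
        right_inv := fun i => rfl }
    · rintro (i | i) _ rfl <;> simp [hα]
    · rintro ⟨i | i⟩
      · rfl
      · change cls α (Sum.inl i) = cls α (Sum.inr i)
        rw [← (hα i).1, cls_apply]
  have e1 : ∀ i, (σ * α) (Sum.inl i) = Sum.inr (c i) := fun i => by
    rw [Perm.mul_apply, (hα i).1, (h i).2]
  have e2 : ∀ i, (σ * α) (Sum.inr i) = Sum.inl (s i) := fun i => by
    rw [Perm.mul_apply, (hα i).2, (h i).1]
  have h3 : cyc (σ * α) = cyc (s * c) := by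
    refine Nat.card_congr
      { toFun := Quot.lift (Sum.elim (fun i => cls (s * c) i) (fun i => cls (s * c) (s i))) ?_
        invFun := Quot.lift (fun i => cls (σ * α) (Sum.inl i)) ?_
        left_inv := ?_
        right_inv := ?_ }
    · rintro (i | i) _ rfl
      · rw [e1]
        exact (cls_apply (s * c) i).symm
      · rw [e2]
        rfl
    · rintro i _ rfl
      rw [Perm.mul_apply s c, ← e2, cls_apply, ← e1, cls_apply]
    · rintro ⟨i | i⟩
      · rfl
      · change cls (σ * α) (Sum.inl (s i)) = cls (σ * α) (Sum.inr i)
        rw [← e2, cls_apply]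
    · rintro ⟨i⟩
      rfl
  have h4 : comps σ α = comps s c := by
    refine Nat.card_congr
      { toFun := Quot.lift (Sum.elim (Quot.mk _) (Quot.mk _)) ?_
        invFun := Quot.lift (fun i => Quot.mk _ (Sum.inl i)) ?_
        left_inv := ?_
        right_inv := ?_ }
    · rintro (i | i) _ (rfl | rfl)
      · simp only [(h i).1, Sum.elim_inl]
        exact Quot.sound (Or.inl rfl)
      · simp [(hα i).1]
      · simp only [(h i).2, Sum.elim_inr]
        exact Quot.sound (Or.inr rfl)
      · simp [(hα i).2]
    · have hst : ∀ i, (Quot.mk (fun x y => σ x = y ∨ α x = y) (Sum.inl i)) =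
          Quot.mk _ (Sum.inr i) := fun i => Quot.sound (Or.inr (hα i).1)
      rintro i _ (rfl | rfl)
      · exact Quot.sound (Or.inl (h i).1)
      · rw [hst, hst]
        exact Quot.sound (Or.inl (h i).2)
    · rintro ⟨i | i⟩
      · rfl
      · exact Quot.sound (Or.inr (hα i).1)
    · rintro ⟨i⟩
      rfl
  have h5 : Nat.card (I ⊕ I) = Nat.card I + Nat.card I := Nat.card_sum
  unfold defect
  rw [h1, h2, h3, h4, h5]
  push_cast
  ring

open Classical in
/-- Disjoint connected sets of cells in a box, indexed by `V ⊕ X`, together with pairs of adjacent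
cells joining a `V`-set to an `X`-set, form a planar bipartite map. -/
theorem exists_hypermap_of_cells {V X I : Type*} [Finite I] (N : ℕ) (C : V ⊕ X → Set (ℤ × ℤ))
    (hbox : ∀ w, C w ⊆ box (N + 1)) (hdisj : ∀ w w' p, p ∈ C w → p ∈ C w' → w = w')
    (hconn : ∀ w, CellConn (C w)) (v : I → V) (x : I → X) (u : I → ℤ × ℤ) (k : I → Fin 4)
    (hu : ∀ i, u i ∈ C (Sum.inl (v i))) (hk : ∀ i, u i + dir (k i) ∈ C (Sum.inr (x i)))
    (hinj : Function.Injective u) :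
    ∃ s c : Perm I, defect s c ≤ 0 ∧ (∀ i, v (s i) = v i) ∧ (∀ i, x (c i) = x i) ∧
      (∀ i j, v i = v j → cls s i = cls s j) ∧ (∀ i j, x i = x j → cls c i = cls c j) := by
  -- The sets `C w` are contracted to single vertices of the grid map; all other cells stay
  -- separate, each with its own label.
  let lab : ℤ × ℤ → (V ⊕ X) ⊕ (ℤ × ℤ) := fun p =>
    if h : ∃ w, p ∈ C w then Sum.inl h.choose else Sum.inr p
  have hlab : ∀ w p, p ∈ C w → lab p = Sum.inl w := by
    intro w p hp
    have h : ∃ w, p ∈ C w := ⟨w, hp⟩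
    simp only [lab, dif_pos h]
    rw [hdisj _ _ p h.choose_spec hp]
  have hlab' : ∀ w p, lab p = Sum.inl w → p ∈ C w := by
    intro w p hp
    by_cases h : ∃ w, p ∈ C w
    · simp only [lab, dif_pos h, Sum.inl.injEq] at hp
      rw [← hp]
      exact h.choose_spec
    · simp only [lab, dif_neg h, reduceCtorEq] at hp
  have hlab'' : ∀ q p, lab p = Sum.inr q → p = q := by
    intro q p hp
    by_cases h : ∃ w, p ∈ C w
    · simp only [lab, dif_pos h, reduceCtorEq] at hp
    · simpa only [lab, dif_neg h, Sum.inr.injEq] using hp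
  let ℓ : GD (N + 1) → (V ⊕ X) ⊕ (ℤ × ℤ) := fun d => lab d.1.1
  obtain ⟨σ, α, hαα, hd, hσ, hσc, hα⟩ := exists_contract ℓ _ (gσ (N + 1)) (gα (N + 1)) rfl
    (gα_mul_self _) (grid_planar N) (fun d => rfl) (by
      rintro ⟨⟨p, hp⟩, i⟩ ⟨⟨q, hq⟩, j⟩ h
      set r := (fun x y => gσ (N + 1) x = y ∨ (gα (N + 1) x = y ∧ ℓ x = ℓ y)) with hr
      have hrot : ∀ (p : box (N + 1)) i j, Quot.mk r (p, i) = Quot.mk r (p, j) := fun p i j =>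
        eq_of_cls_eq (cls_gσ p i j) (Quot.mk r) fun z => (Quot.sound (r := r) (Or.inl rfl)).symm
      change lab p = lab q at h
      rcases hw : lab p with w | p'
      · have hpw := hlab' w p hw
        have hqw := hlab' w q (h ▸ hw)
        have key : ∀ q, Relation.ReflTransGen
            (fun a b => a ∈ C w ∧ b ∈ C w ∧ ∃ i, b = a + dir i) p q → ∀ (hq : q ∈ box (N + 1)),
            ∀ j, Quot.mk r (⟨p, hp⟩, i) = Quot.mk r (⟨q, hq⟩, j) := by
          intro q hpq
          induction hpq with
          | refl => intro hq j; exact hrot _ _ _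
          | tail _ hbc ih =>
            rename_i b c _
            obtain ⟨hb, hc, m, rfl⟩ := hbc
            intro hq j
            rw [ih (hbox w hb) m, hrot _ j (m + 2)]
            refine Quot.sound (Or.inr ⟨?_, ?_⟩)
            · rw [gα_apply, gridStep_of_mem hq]
            · change lab b = lab (b + dir m)
              rw [hlab w _ hb, hlab w _ hc]
        exact key q (hconn w p hpw q hqw) hq j
      · have h1 := hlab'' p' p hw
        have h2 := hlab'' p' q (h ▸ hw)
        subst h1
        subst h2
        exact hrot _ _ _)
  let d : I → GD (N + 1) := fun i => (⟨u i, hbox _ (hu i)⟩, k i)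
  have hαd : ∀ i, α (d i) = (⟨u i + dir (k i), hbox _ (hk i)⟩, k i + 2) := by
    intro i
    have : gα (N + 1) (d i) = (⟨u i + dir (k i), hbox _ (hk i)⟩, k i + 2) := by
      rw [gα_apply, gridStep_of_mem (d := d i) (hbox _ (hk i))]
    rw [hα, this]
    rw [this]
    change lab (u i + dir (k i)) ≠ lab (u i)
    rw [hlab _ _ (hu i), hlab _ _ (hk i)]
    simp
  have hℓd : ∀ i, ℓ (d i) = Sum.inl (Sum.inl (v i)) := fun i => hlab _ _ (hu i)
  have hℓαd : ∀ i, ℓ (α (d i)) = Sum.inl (Sum.inr (x i)) := fun i => by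
    rw [hαd]; exact hlab _ _ (hk i)
  have hdinj : Function.Injective d := by
    intro i j h
    apply hinj
    exact congrArg (fun z : GD (N + 1) => z.1.1) h
  -- All darts except those of the chosen adjacent pairs are deleted.
  let e : I ⊕ I → GD (N + 1) := Sum.elim d (fun i => α (d i))
  have hℓe : ∀ i j, ℓ (e (Sum.inl i)) ≠ ℓ (e (Sum.inr j)) := by
    intro i j h
    have : ℓ (d i) = ℓ (α (d j)) := h
    rw [hℓd, hℓαd] at this
    simp at this
  have he : Function.Injective e := by
    rintro (i | i) (j | j) h
    · exact congrArg Sum.inl (hdinj h)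
    · exact absurd (congrArg ℓ h) (hℓe i j)
    · exact absurd (congrArg ℓ h.symm) (hℓe j i)
    · exact congrArg Sum.inr (hdinj (α.injective h))
  have hα2 : ∀ z, α (α z) = z := fun z => by rw [← Perm.mul_apply, hαα, Perm.one_apply]
  obtain ⟨σJ, αJ, hdJ, hαJ, -, -, hclsJ, hσJ⟩ := exists_delete e he σ α (by
    rintro (i | i)
    · exact ⟨Sum.inr i, rfl⟩
    · exact ⟨Sum.inl i, (hα2 (d i)).symm⟩) hd
  have hℓJ : ∀ z, ℓ (e (σJ z)) = ℓ (e z) := fun z => eq_of_cls_eq (hσJ z) ℓ hσ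
  obtain ⟨s, c, hsc⟩ := sum_perm_split σJ
    (fun i => by
      rcases h : σJ (Sum.inl i) with j | j
      · exact ⟨j, rfl⟩
      · have := hℓJ (Sum.inl i)
        rw [h] at this
        exact absurd this.symm (hℓe _ _))
    (fun i => by
      rcases h : σJ (Sum.inr i) with j | j
      · have := hℓJ (Sum.inr i)
        rw [h] at this
        exact absurd this (hℓe _ _)
      · exact ⟨j, rfl⟩)
  have hαJ' : ∀ i, αJ (Sum.inl i) = Sum.inr i ∧ αJ (Sum.inr i) = Sum.inl i := by
    intro i
    constructor
    · apply he
      rw [hαJ]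
      rfl
    · apply he
      rw [hαJ]
      exact hα2 (d i)
  refine ⟨s, c, ?_, fun i => ?_, fun i => ?_, fun i j hij => ?_, fun i j hij => ?_⟩
  · rwa [defect_bipartite σJ αJ s c hsc hαJ']
  · have : ℓ (d (s i)) = ℓ (d i) := by
      have := hℓJ (Sum.inl i)
      rwa [(hsc i).1] at this
    rw [hℓd, hℓd] at this
    simpa using this
  · have : ℓ (α (d (c i))) = ℓ (α (d i)) := by
      have := hℓJ (Sum.inr i)
      rwa [(hsc i).2] at this
    rw [hℓαd, hℓαd] at this
    simpa using this
  · have h1 : cls σJ (Sum.inl i) = cls σJ (Sum.inl j) := by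
      apply hclsJ
      apply hσc
      change ℓ (d i) = ℓ (d j)
      rw [hℓd, hℓd, hij]
    have := eq_of_cls_eq h1 (Sum.elim (fun i => some (cls s i)) (fun _ => none)) (by
      rintro (i | i)
      · simp [(hsc i).1, cls_apply]
      · simp [(hsc i).2])
    simpa using this
  · have h1 : cls σJ (Sum.inr i) = cls σJ (Sum.inr j) := by
      apply hclsJ
      apply hσc
      change ℓ (α (d i)) = ℓ (α (d j))
      rw [hℓαd, hℓαd, hij]
    have := eq_of_cls_eq h1 (Sum.elim (fun _ => none) (fun i => some (cls c i))) (by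
      rintro (i | i)
      · simp [(hsc i).1]
      · simp [(hsc i).2, cls_apply])
    simpa using this

/-! ### Discretizing compact connected sets -/

/-- Two cells of `C` sharing a side. -/
def CellStep (C : Set (ℤ × ℤ)) (a b : ℤ × ℤ) : Prop := a ∈ C ∧ b ∈ C ∧ ∃ i, b = a + dir i

/-- Two cells joined by a path of cells of `C`. -/
def CellPath (C : Set (ℤ × ℤ)) : ℤ × ℤ → ℤ × ℤ → Prop := Relation.ReflTransGen (CellStep C)

theorem CellPath.symm {C : Set (ℤ × ℤ)} {p q : ℤ × ℤ} (h : CellPath C p q) : CellPath C q p := by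
  have hs : ∀ a b, CellStep C a b → CellStep C b a := by
    rintro a b ⟨ha, hb, i, rfl⟩
    exact ⟨hb, ha, i + 2, by rw [dir_add_two]; abel⟩
  induction h with
  | refl => exact Relation.ReflTransGen.refl
  | tail _ h ih => exact Relation.ReflTransGen.head (hs _ _ h) ih

theorem CellPath.trans {C : Set (ℤ × ℤ)} {p q r : ℤ × ℤ} (h : CellPath C p q)
    (h' : CellPath C q r) : CellPath C p r := Relation.ReflTransGen.trans h h'

theorem CellPath.mono {C C' : Set (ℤ × ℤ)} (hC : C ⊆ C') {p q : ℤ × ℤ} (h : CellPath C p q) :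
    CellPath C' p q :=
  Relation.ReflTransGen.mono (fun _ _ h => ⟨hC h.1, hC h.2.1, h.2.2⟩) _ _ h

/-- The cell `p` is close to the point `z`, after scaling by `M` and translating by `(R, R)`. -/
def near (M R : ℝ) (z : ℝ × ℝ) (p : ℤ × ℤ) : Prop :=
  |M * z.1 + R - p.1| < 1 ∧ |M * z.2 + R - p.2| < 1

/-- The cells close to a given set. -/
def cells (M R : ℝ) (K : Set (ℝ × ℝ)) : Set (ℤ × ℤ) := {p | ∃ z ∈ K, near M R z p}

theorem exists_near (M R : ℝ) (z : ℝ × ℝ) : ∃ p, near M R z p := by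
  refine ⟨(⌊M * z.1 + R⌋, ⌊M * z.2 + R⌋), ?_, ?_⟩ <;> rw [abs_lt] <;> dsimp only
  · constructor <;> linarith [Int.floor_le (M * z.1 + R), Int.lt_floor_add_one (M * z.1 + R)]
  · constructor <;> linarith [Int.floor_le (M * z.2 + R), Int.lt_floor_add_one (M * z.2 + R)]

theorem near_path {M R : ℝ} {z : ℝ × ℝ} {K : Set (ℝ × ℝ)} (hz : z ∈ K) {p q : ℤ × ℤ}
    (hp : near M R z p) (hq : near M R z q) : CellPath (cells M R K) p q := by
  obtain ⟨a, b⟩ := p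
  obtain ⟨c, d⟩ := q
  have hm : near M R z (c, b) := ⟨hq.1, hp.2⟩
  have h1 : |a - c| ≤ 1 := by
    have h1 := abs_lt.1 hp.1
    have h2 := abs_lt.1 hq.1
    dsimp only at h1 h2
    have : |((a - c : ℤ) : ℝ)| < 2 := by
      rw [abs_lt]; push_cast; constructor <;> linarith
    have : |a - c| < 2 := by exact_mod_cast this
    omega
  have h2 : |b - d| ≤ 1 := by
    have h1 := abs_lt.1 hp.2
    have h2 := abs_lt.1 hq.2
    dsimp only at h1 h2
    have : |((b - d : ℤ) : ℝ)| < 2 := by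
      rw [abs_lt]; push_cast; constructor <;> linarith
    have : |b - d| < 2 := by exact_mod_cast this
    omega
  have s1 : CellPath (cells M R K) (a, b) (c, b) := by
    rcases (show a = c ∨ c = a + 1 ∨ c = a - 1 by rw [abs_le] at h1; omega) with rfl | rfl | rfl
    · exact Relation.ReflTransGen.refl
    · exact Relation.ReflTransGen.single ⟨⟨z, hz, hp⟩, ⟨z, hz, hm⟩, 0, by simp [dir]⟩
    · exact Relation.ReflTransGen.single ⟨⟨z, hz, hp⟩, ⟨z, hz, hm⟩, 2, by simp [dir]; rfl⟩
  have s2 : CellPath (cells M R K) (c, b) (c, d) := by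
    rcases (show b = d ∨ d = b + 1 ∨ d = b - 1 by rw [abs_le] at h2; omega) with rfl | rfl | rfl
    · exact Relation.ReflTransGen.refl
    · exact Relation.ReflTransGen.single ⟨⟨z, hz, hm⟩, ⟨z, hz, hq⟩, 1, by simp [dir]⟩
    · exact Relation.ReflTransGen.single ⟨⟨z, hz, hm⟩, ⟨z, hz, hq⟩, 3, by simp [dir]; rfl⟩
  exact s1.trans s2

theorem cells_conn {K : Set (ℝ × ℝ)} (hK : IsPreconnected K) (M R : ℝ) :
    CellConn (cells M R K) := by
  rintro p ⟨z, hz, hp⟩ q ⟨w, hw, hq⟩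
  have := hK.induction₂ (fun z w => ∀ p q, near M R z p → near M R w q →
    CellPath (cells M R K) p q) ?_ ?_ ?_ hz hw
  · exact this p q hp hq
  · intro x hx
    obtain ⟨m, hm⟩ := exists_near M R x
    have h1 : ∀ᶠ y in nhds x, near M R y m := by
      have : IsOpen {y | near M R y m} := by
        have o1 : IsOpen {y : ℝ × ℝ | |M * y.1 + R - m.1| < 1} :=
          isOpen_lt (by fun_prop) (by fun_prop)
        have o2 : IsOpen {y : ℝ × ℝ | |M * y.2 + R - m.2| < 1} :=
          isOpen_lt (by fun_prop) (by fun_prop)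
        exact o1.inter o2
      exact this.mem_nhds hm
    filter_upwards [nhdsWithin_le_nhds h1, self_mem_nhdsWithin] with y hy hyK p q hp hq
    exact (near_path hx hp hm).trans (near_path hyK hy hq)
  · intro x y z hx hy hz h1 h2 p q hp hq
    obtain ⟨m, hm⟩ := exists_near M R y
    exact (h1 p m hp hm).trans (h2 m q hm hq)
  · intro x y hx hy h p q hp hq
    exact (h q p hq hp).symm

theorem eventually_disjoint_cells {K L : Set (ℝ × ℝ)} (hK : IsCompact K) (hL : IsCompact L)
    (h : Disjoint K L) : ∀ᶠ M : ℝ in Filter.atTop, ∀ R p, p ∈ cells M R K → p ∉ cells M R L := by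
  obtain ⟨δ, hδ, hd⟩ : ∃ δ > 0, ∀ z ∈ K, ∀ w ∈ L, δ ≤ dist z w := by
    obtain ⟨δ, hδ, hd⟩ := h.exists_thickenings hK hL.isClosed
    refine ⟨δ, hδ, fun z hz w hw => ?_⟩
    by_contra hc
    push Not at hc
    refine (Set.disjoint_left.1 hd : ∀ ⦃a⦄, _ → _) (a := w) ?_ ?_
    · rw [Metric.mem_thickening_iff]
      exact ⟨z, hz, by rwa [dist_comm]⟩
    · exact Metric.self_subset_thickening hδ _ hw
  filter_upwards [Filter.eventually_ge_atTop (2 / δ)] with M hM R p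
  rintro ⟨z, hz, hz1, hz2⟩ ⟨w, hw, hw1, hw2⟩
  have h1 := hd z hz w hw
  have h2 : 2 ≤ M * δ := by rwa [div_le_iff₀ hδ] at hM
  have hM0 : 0 < M := lt_of_lt_of_le (by positivity) hM
  rw [Prod.dist_eq, le_max_iff, Real.dist_eq, Real.dist_eq] at h1
  rw [abs_lt] at hz1 hz2 hw1 hw2
  rcases h1 with h1 | h1
  · have h3 : |M * (z.1 - w.1)| < 2 := by rw [abs_lt]; constructor <;> linarith
    rw [abs_mul, abs_of_pos hM0] at h3
    nlinarith
  · have h3 : |M * (z.2 - w.2)| < 2 := by rw [abs_lt]; constructor <;> linarith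
    rw [abs_mul, abs_of_pos hM0] at h3
    nlinarith

theorem eventually_cells_nonneg {K : Set (ℝ × ℝ)} (hK : IsCompact K) (M : ℝ) :
    ∀ᶠ R : ℝ in Filter.atTop, ∀ p ∈ cells M R K, 0 ≤ p.1 ∧ 0 ≤ p.2 := by
  obtain ⟨B, hB⟩ : ∃ B : ℝ, ∀ z ∈ K, ‖z‖ ≤ B := hK.isBounded.exists_norm_le
  filter_upwards [Filter.eventually_ge_atTop (|M| * B + 1)] with R hR
  rintro p ⟨z, hz, h1, h2⟩
  have hz := hB z hz
  have a1 : |M * z.1| ≤ |M| * B := by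
    rw [abs_mul]
    exact mul_le_mul_of_nonneg_left ((norm_fst_le z).trans hz) (abs_nonneg M)
  have a2 : |M * z.2| ≤ |M| * B := by
    rw [abs_mul]
    exact mul_le_mul_of_nonneg_left ((norm_snd_le z).trans hz) (abs_nonneg M)
  rw [abs_lt] at h1 h2
  rw [abs_le] at a1 a2
  constructor
  · have : (-1 : ℝ) < p.1 := by linarith
    have : (-1 : ℤ) < p.1 := by exact_mod_cast this
    omega
  · have : (-1 : ℝ) < p.2 := by linarith
    have : (-1 : ℤ) < p.2 := by exact_mod_cast this
    omega

theorem eventually_cells_lt {K : Set (ℝ × ℝ)} (hK : IsCompact K) (M R : ℝ) :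
    ∀ᶠ N : ℕ in Filter.atTop, ∀ p ∈ cells M R K, p.1 < N ∧ p.2 < N := by
  obtain ⟨B, hB⟩ : ∃ B : ℝ, ∀ z ∈ K, ‖z‖ ≤ B := hK.isBounded.exists_norm_le
  filter_upwards [tendsto_natCast_atTop_atTop.eventually_ge_atTop (|M| * B + R + 1)] with N hR
  rintro p ⟨z, hz, h1, h2⟩
  have hz := hB z hz
  have a1 : |M * z.1| ≤ |M| * B := by
    rw [abs_mul]
    exact mul_le_mul_of_nonneg_left ((norm_fst_le z).trans hz) (abs_nonneg M)
  have a2 : |M * z.2| ≤ |M| * B := by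
    rw [abs_mul]
    exact mul_le_mul_of_nonneg_left ((norm_snd_le z).trans hz) (abs_nonneg M)
  rw [abs_lt] at h1 h2
  rw [abs_le] at a1 a2
  constructor
  · have : (p.1 : ℝ) < N := by linarith
    exact_mod_cast this
  · have : (p.2 : ℝ) < N := by linarith
    exact_mod_cast this

/-- A path from outside `B` to `B` has a last cell before it first enters `B`. -/
theorem exists_entry {S B : Set (ℤ × ℤ)} {a b : ℤ × ℤ} (ha : a ∉ B) (hb : b ∈ B)
    (h : CellPath S a b) : ∃ q i, CellPath (S \ B) a q ∧ q + dir i ∈ B := by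
  by_contra hc
  push Not at hc
  have key : ∀ y, CellPath S a y → CellPath (S \ B) a y ∧ y ∉ B := by
    intro y hy
    induction hy with
    | refl => exact ⟨Relation.ReflTransGen.refl, ha⟩
    | tail _ hbc ih =>
      obtain ⟨hb, hc', i, rfl⟩ := hbc
      have := hc _ i ih.1
      exact ⟨ih.1.trans (Relation.ReflTransGen.single ⟨⟨hb, ih.2⟩, ⟨hc', this⟩, i, rfl⟩), this⟩
  exact (key b h).2 hb

theorem cellPath_mem {S : Set (ℤ × ℤ)} {a b : ℤ × ℤ} (ha : a ∈ S) (h : CellPath S a b) :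
    b ∈ S := by
  induction h with
  | refl => exact ha
  | tail _ h _ => exact h.2.1

/-- Disjoint compact connected sets `B w` in the plane, indexed by `V ⊕ X`, joined by disjoint
compact connected sets `S i` from `B (v i)` to `B (x i)`, form a planar bipartite map. -/
theorem exists_hypermap_of_compacts {V X I : Type*} [Finite V] [Finite X] [Finite I]
    (B : V ⊕ X → Set (ℝ × ℝ)) (S : I → Set (ℝ × ℝ)) (v : I → V) (x : I → X)
    (hBc : ∀ w, IsCompact (B w)) (hSc : ∀ i, IsCompact (S i))
    (hBp : ∀ w, IsPreconnected (B w)) (hSp : ∀ i, IsPreconnected (S i))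
    (hBB : ∀ w w', w ≠ w' → Disjoint (B w) (B w'))
    (hSS : ∀ i j, i ≠ j → Disjoint (S i) (S j))
    (hSB : ∀ i w, w ≠ Sum.inl (v i) → w ≠ Sum.inr (x i) → Disjoint (S i) (B w))
    (hSv : ∀ i, (S i ∩ B (Sum.inl (v i))).Nonempty)
    (hSx : ∀ i, (S i ∩ B (Sum.inr (x i))).Nonempty) :
    ∃ s c : Perm I, defect s c ≤ 0 ∧ (∀ i, v (s i) = v i) ∧ (∀ i, x (c i) = x i) ∧
      (∀ i j, v i = v j → cls s i = cls s j) ∧ (∀ i j, x i = x j → cls c i = cls c j) := by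
  classical
  obtain ⟨M, hM1, hM2, hM3⟩ : ∃ M : ℝ,
      (∀ w w', w ≠ w' → ∀ R p, p ∈ cells M R (B w) → p ∉ cells M R (B w')) ∧
      (∀ i j, i ≠ j → ∀ R p, p ∈ cells M R (S i) → p ∉ cells M R (S j)) ∧
      (∀ i w, w ≠ Sum.inl (v i) → w ≠ Sum.inr (x i) →
        ∀ R p, p ∈ cells M R (S i) → p ∉ cells M R (B w)) := by
    refine Filter.Eventually.exists (f := Filter.atTop) ?_
    refine Filter.Eventually.and ?_ (Filter.Eventually.and ?_ ?_)
    · simp only [Filter.eventually_all]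
      exact fun w w' h => eventually_disjoint_cells (hBc w) (hBc w') (hBB w w' h)
    · simp only [Filter.eventually_all]
      exact fun w w' h => eventually_disjoint_cells (hSc w) (hSc w') (hSS w w' h)
    · simp only [Filter.eventually_all]
      exact fun i w h h' => eventually_disjoint_cells (hSc i) (hBc w) (hSB i w h h')
  obtain ⟨R, hR1, hR2⟩ : ∃ R : ℝ, (∀ w, ∀ p ∈ cells M R (B w), 0 ≤ p.1 ∧ 0 ≤ p.2) ∧
      (∀ i, ∀ p ∈ cells M R (S i), 0 ≤ p.1 ∧ 0 ≤ p.2) := by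
    refine Filter.Eventually.exists (f := Filter.atTop) ?_
    refine Filter.Eventually.and ?_ ?_
    · rw [Filter.eventually_all]
      exact fun w => eventually_cells_nonneg (hBc w) M
    · rw [Filter.eventually_all]
      exact fun w => eventually_cells_nonneg (hSc w) M
  obtain ⟨N, hN1, hN2⟩ : ∃ N : ℕ, (∀ w, ∀ p ∈ cells M R (B w), p.1 < N ∧ p.2 < N) ∧
      (∀ i, ∀ p ∈ cells M R (S i), p.1 < N ∧ p.2 < N) := by
    refine Filter.Eventually.exists (f := Filter.atTop) ?_
    refine Filter.Eventually.and ?_ ?_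
    · rw [Filter.eventually_all]
      exact fun w => eventually_cells_lt (hBc w) M R
    · rw [Filter.eventually_all]
      exact fun w => eventually_cells_lt (hSc w) M R
  have hBbox : ∀ w, cells M R (B w) ⊆ box (N + 1) := by
    intro w p hp
    have h1 := hR1 w p hp
    have h2 := hN1 w p hp
    rw [mem_box]; push_cast; omega
  have hSbox : ∀ i, cells M R (S i) ⊆ box (N + 1) := by
    intro w p hp
    have h1 := hR2 w p hp
    have h2 := hN2 w p hp
    rw [mem_box]; push_cast; omega
  -- a cell common to the strip `S i` and the set around its end `v i`
  have ha : ∀ i, ∃ a, a ∈ cells M R (S i) ∧ a ∈ cells M R (B (Sum.inl (v i))) := by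
    intro i
    obtain ⟨z, h1, h2⟩ := hSv i
    obtain ⟨p, hp⟩ := exists_near M R z
    exact ⟨p, ⟨z, h1, hp⟩, ⟨z, h2, hp⟩⟩
  choose a haS haB using ha
  have hb : ∀ i, ∃ b, b ∈ cells M R (S i) ∧ b ∈ cells M R (B (Sum.inr (x i))) := by
    intro i
    obtain ⟨z, h1, h2⟩ := hSx i
    obtain ⟨p, hp⟩ := exists_near M R z
    exact ⟨p, ⟨z, h1, hp⟩, ⟨z, h2, hp⟩⟩
  choose b hbS hbB using hb
  have haX : ∀ i, a i ∉ cells M R (B (Sum.inr (x i))) := fun i =>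
    hM1 _ _ (by simp) R _ (haB i)
  have hent : ∀ i, ∃ q k, CellPath (cells M R (S i) \ cells M R (B (Sum.inr (x i)))) (a i) q ∧
      q + dir k ∈ cells M R (B (Sum.inr (x i))) := fun i =>
    exists_entry (haX i) (hbB i) (cells_conn (hSp i) M R _ (haS i) _ (hbS i))
  choose u k hu hk using hent
  -- the part of the strip that is attached to the vertex side
  let T : I → Set (ℤ × ℤ) := fun i =>
    {q | CellPath (cells M R (S i) \ cells M R (B (Sum.inr (x i)))) (a i) q}
  have hTS : ∀ i q, q ∈ T i → q ∈ cells M R (S i) ∧ q ∉ cells M R (B (Sum.inr (x i))) :=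
    fun i q hq => cellPath_mem
      (S := cells M R (S i) \ cells M R (B (Sum.inr (x i)))) ⟨haS i, haX i⟩ hq
  let C : V ⊕ X → Set (ℤ × ℤ) := fun w => cells M R (B w) ∪ {q | ∃ i, w = Sum.inl (v i) ∧ q ∈ T i}
  have hTT : ∀ i w q, q ∈ T i → q ∈ cells M R (B w) → w = Sum.inl (v i) := by
    intro i w q hq hqw
    by_contra hne
    by_cases hx : w = Sum.inr (x i)
    · subst hx
      exact (hTS i q hq).2 hqw
    · exact hM3 i w hne hx R q (hTS i q hq).1 hqw
  refine exists_hypermap_of_cells N C ?_ ?_ ?_ v x u k ?_ ?_ ?_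
  · rintro w p (hp | ⟨i, rfl, hp⟩)
    · exact hBbox w hp
    · exact hSbox i (hTS i p hp).1
  · rintro w w' p (hp | ⟨i, rfl, hp⟩) (hp' | ⟨j, rfl, hp'⟩)
    · by_contra h
      exact hM1 w w' h R p hp hp'
    · exact hTT _ _ _ hp' hp
    · exact (hTT _ _ _ hp hp').symm
    · by_contra h
      have hij : i ≠ j := by rintro rfl; exact h rfl
      exact hM2 i j hij R p (hTS i p hp).1 (hTS j p hp').1
  · intro w
    have hbase : ∀ p ∈ cells M R (B w), ∀ q ∈ cells M R (B w), CellPath (C w) p q :=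
      fun p hp q hq => CellPath.mono Set.subset_union_left (cells_conn (hBp w) M R p hp q hq)
    have hreach : ∀ p ∈ C w, ∃ q ∈ cells M R (B w), CellPath (C w) q p := by
      rintro p (hp | ⟨i, rfl, hp⟩)
      · exact ⟨p, hp, Relation.ReflTransGen.refl⟩
      · refine ⟨a i, haB i, ?_⟩
        have hp' : CellPath (cells M R (S i) \ cells M R (B (Sum.inr (x i)))) (a i) p := hp
        have key : ∀ y, CellPath (cells M R (S i) \ cells M R (B (Sum.inr (x i)))) (a i) y →
            CellPath (C (Sum.inl (v i))) (a i) y := by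
          intro y hy
          induction hy with
          | refl => exact Relation.ReflTransGen.refl
          | tail h1 h2 ih =>
            refine ih.trans (Relation.ReflTransGen.single ⟨?_, ?_, h2.2.2⟩)
            · exact Or.inr ⟨i, rfl, h1⟩
            · exact Or.inr ⟨i, rfl, Relation.ReflTransGen.tail h1 h2⟩
        exact key p hp'
    intro p hp q hq
    obtain ⟨p', hp', h1⟩ := hreach p hp
    obtain ⟨q', hq', h2⟩ := hreach q hq
    exact (h1.symm.trans (hbase p' hp' q' hq')).trans h2
  · exact fun i => Or.inr ⟨i, rfl, hu i⟩
  · exact fun i => Or.inl (hk i)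
  · intro i j h
    by_contra hij
    exact hM2 i j hij R (u i) (hTS i _ (hu i)).1 (h ▸ (hTS j _ (hu j)).1)

/-! ### From drawings to hypermaps -/

theorem exists_enclosing {Z : Set ℝ} (hZ : Z.Finite) (h : Z ⊆ Ioo 0 1) :
    ∃ a b : ℝ, 0 < a ∧ a < b ∧ b < 1 ∧ Z ⊆ Ioo a b := by
  induction Z, hZ using Set.Finite.induction_on with
  | empty => exact ⟨1 / 3, 2 / 3, by norm_num, by norm_num, by norm_num, by simp⟩
  | insert _ _ ih =>
    rename_i z s _ _
    obtain ⟨a, b, ha, hab, hb, hs⟩ := ih ((Set.subset_insert _ _).trans h)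
    have hz := h (Set.mem_insert z s)
    refine ⟨min a (z / 2), max b ((1 + z) / 2), ?_, ?_, ?_, ?_⟩
    · exact lt_min ha (by linarith [hz.1])
    · exact (min_le_left _ _).trans_lt (hab.trans_le (le_max_left _ _))
    · exact max_lt hb (by linarith [hz.2])
    · rintro y (rfl | hy)
      · exact ⟨(min_le_right _ _).trans_lt (by linarith [hz.1]),
          lt_of_lt_of_le (by linarith [hz.2]) (le_max_right _ _)⟩
      · exact ⟨(min_le_left _ _).trans_lt (hs hy).1, (hs hy).2.trans_le (le_max_left _ _)⟩

theorem preconnected_biUnion {ι P : Type*} [TopologicalSpace P] (s : Set ι) (K : ι → Set P)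
    (h : ∀ i ∈ s, IsPreconnected (K i)) (h' : ∀ i ∈ s, ∀ j ∈ s, (K i ∩ K j).Nonempty) :
    IsPreconnected (⋃ i ∈ s, K i) := by
  refine isPreconnected_of_forall_pair fun p hp q hq => ?_
  simp only [Set.mem_iUnion] at hp hq
  obtain ⟨i, hi, hp⟩ := hp
  obtain ⟨j, hj, hq⟩ := hq
  exact ⟨K i ∪ K j, Set.union_subset (Set.subset_biUnion_of_mem hi) (Set.subset_biUnion_of_mem hj),
    Or.inl hp, Or.inr hq, IsPreconnected.union' (h' i hi j hj) (h i hi) (h j hj)⟩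

section
variable {V : Type*} {G : SimpleGraph V} (D : Drawing G)

/-- The parameters at which the curve of `e` meets the interior of another curve. -/
def crossParams (e : G.edgeSet) : Set ℝ :=
  {t | t ∈ Ioo (0 : ℝ) 1 ∧ ∃ f, f ≠ e ∧ D.curve e t ∈ D.curve f '' Ioo 0 1}

theorem crossParams_finite [Finite V] (e : G.edgeSet) : (crossParams D e).Finite := by
  have h1 : (⋃ f ∈ {f | f ≠ e}, (D.curve e '' Icc 0 1 ∩ D.curve f '' Icc 0 1)).Finite := by
    refine Set.Finite.biUnion (Set.toFinite _) fun f hf => ?_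
    exact D.finite_meet e f (Ne.symm hf)
  refine Set.Finite.of_finite_image (f := D.curve e) (h1.subset ?_) ?_
  · rintro _ ⟨t, ⟨ht, f, hf, hp⟩, rfl⟩
    refine Set.mem_biUnion hf ⟨⟨t, Ioo_subset_Icc_self ht, rfl⟩, ?_⟩
    exact Set.image_mono Ioo_subset_Icc_self hp
  · exact (D.curve_inj e).mono fun t ht => Ioo_subset_Icc_self ht.1

/-- Two curves meet only at crossings and at common ends. -/
theorem curve_meet {e f : G.edgeSet} (hef : e ≠ f) {t u : ℝ} (ht : t ∈ Icc (0 : ℝ) 1)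
    (hu : u ∈ Icc (0 : ℝ) 1) (h : D.curve e t = D.curve f u) :
    (t ∈ crossParams D e ∧ u ∈ crossParams D f ∧ D.Crosses e f) ∨
      ((t = 0 ∨ t = 1) ∧ (u = 0 ∨ u = 1)) := by
  have hends : ∀ (e : G.edgeSet) (t : ℝ), t ∈ Icc (0 : ℝ) 1 → t ∉ Ioo (0 : ℝ) 1 →
      (t = 0 ∨ t = 1) ∧ ∃ v, D.curve e t = D.pos v := by
    intro e t ht ht'
    obtain ⟨a, b, -, h0, h1⟩ := D.curve_ends e
    rcases ht.1.eq_or_lt with h | h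
    · exact ⟨Or.inl h.symm, a, by rw [← h, h0]⟩
    rcases ht.2.eq_or_lt with h' | h'
    · exact ⟨Or.inr h', b, by rw [h', h1]⟩
    exact absurd ⟨h, h'⟩ ht'
  by_cases h1 : t ∈ Ioo (0 : ℝ) 1 <;> by_cases h2 : u ∈ Ioo (0 : ℝ) 1
  · exact Or.inl ⟨⟨h1, f, hef.symm, u, h2, h.symm⟩, ⟨h2, e, hef, t, h1, h⟩, hef,
      D.curve e t, ⟨t, h1, rfl⟩, u, h2, h.symm⟩
  · obtain ⟨-, v, hv⟩ := hends f u hu h2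
    exact absurd (h.trans hv) (D.interior_no_vertex e t h1 v)
  · obtain ⟨-, v, hv⟩ := hends e t ht h1
    exact absurd (h.symm.trans hv) (D.interior_no_vertex f u h2 v)
  · exact Or.inr ⟨(hends e t ht h1).1, (hends f u hu h2).1⟩

/-- The planar structure of an almost planar drawing, with half-edges as points: `s` rotates the
half-edges around each vertex, and `c` those around each crossing (or around the middle of an
uncrossed edge). -/
theorem exists_hypermap_of_drawing [Finite V] (hD : D.IsAlmostPlanar) :
    ∃ (v : G.edgeSet × Bool → V) (x : G.edgeSet → Set G.edgeSet)
      (s c : Perm (G.edgeSet × Bool)),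
      (∀ e : G.edgeSet, (e : Sym2 V) = s(v (e, false), v (e, true))) ∧
      (∀ e f g, x e = x f → x e = x g → f = g ∨ e = f ∨ e = g) ∧
      defect s c ≤ 0 ∧ (∀ i, v (s i) = v i) ∧ (∀ i, x (c i).1 = x i.1) ∧
      (∀ i j, v i = v j → cls s i = cls s j) ∧ (∀ i j, x i.1 = x j.1 → cls c i = cls c j) := by
  classical
  choose va vb hvab hva hvb using D.curve_ends
  have hsym : ∀ e f, D.Crosses e f → D.Crosses f e := by
    rintro e f ⟨h, p, h1, h2⟩
    exact ⟨h.symm, p, h2, h1⟩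
  let v : G.edgeSet × Bool → V := fun i => if i.2 then vb i.1 else va i.1
  let x : G.edgeSet → Set G.edgeSet := fun e => {f | e = f ∨ D.Crosses e f}
  have hx : ∀ e f, x e = x f ↔ (e = f ∨ D.Crosses e f) := by
    intro e f
    constructor
    · intro h
      have : f ∈ x f := Or.inl rfl
      rw [← h] at this
      exact this
    · rintro (rfl | h)
      · rfl
      · have hs := hsym _ _ h
        ext g
        constructor
        · rintro (rfl | hg)
          · exact Or.inr hs
          · exact Or.inl (hD _ _ _ h hg)
        · rintro (rfl | hg)
          · exact Or.inr h
          · exact Or.inl (hD _ _ _ hs hg)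
  have htau : ∀ e, ∃ a b : ℝ, 0 < a ∧ a < b ∧ b < 1 ∧ crossParams D e ⊆ Ioo a b := fun e =>
    exists_enclosing (crossParams_finite D e) fun t ht => ht.1
  choose a b ha hab hb hZ using htau
  -- `J i` is the outer part of the half-edge `i`, merged with its vertex; `M i` is its inner part, a
  -- strip leading from there to the middle part `Icc (a e) (b e)`, which contains all crossings.
  let J : G.edgeSet × Bool → Set ℝ := fun i =>
    if i.2 then Icc ((1 + b i.1) / 2) 1 else Icc 0 (a i.1 / 2)
  let M : G.edgeSet × Bool → Set ℝ := fun i =>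
    if i.2 then Icc (b i.1) ((1 + b i.1) / 2) else Icc (a i.1 / 2) (a i.1)
  have hJ01 : ∀ i t, t ∈ J i → t ∈ Icc (0 : ℝ) 1 ∧ t ∉ Icc (a i.1) (b i.1) := by
    rintro ⟨e, β⟩ t ht
    have := ha e; have := hab e; have := hb e
    cases β <;> simp only [J, Bool.false_eq_true, if_true, if_false, mem_Icc] at ht ⊢ <;>
      refine ⟨⟨?_, ?_⟩, fun h => ?_⟩ <;>
      linarith [ht.1, ht.2]
  have hM01 : ∀ i t, t ∈ M i → t ∈ Icc (0 : ℝ) 1 ∧ t ∉ Ioo (a i.1) (b i.1) ∧ t ≠ 0 ∧ t ≠ 1 := by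
    rintro ⟨e, β⟩ t ht
    have := ha e; have := hab e; have := hb e
    cases β <;> simp only [M, Bool.false_eq_true, if_true, if_false, mem_Icc, mem_Ioo] at ht ⊢ <;>
      refine ⟨⟨?_, ?_⟩, fun h => ?_, fun h => ?_, fun h => ?_⟩ <;>
      linarith [ht.1, ht.2]
  have hK01 : ∀ e t, t ∈ Icc (a e) (b e) → t ∈ Icc (0 : ℝ) 1 ∧ t ≠ 0 ∧ t ≠ 1 := by
    intro e t ht
    have := ha e; have := hab e; have := hb e
    refine ⟨⟨?_, ?_⟩, fun h => ?_, fun h => ?_⟩ <;> linarith [ht.1, ht.2]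
  have hJJ : ∀ e β β' t, t ∈ J (e, β) → t ∈ J (e, β') → β = β' := by
    intro e β β' t h h'
    have := ha e; have := hab e; have := hb e
    cases β <;> cases β' <;> simp [J] at h h' ⊢ <;> linarith [h.1, h.2, h'.1, h'.2]
  have hMM : ∀ e β β' t, t ∈ M (e, β) → t ∈ M (e, β') → β = β' := by
    intro e β β' t h h'
    have := ha e; have := hab e; have := hb e
    cases β <;> cases β' <;> simp [M] at h h' ⊢ <;> linarith [h.1, h.2, h'.1, h'.2]
  have hMJ : ∀ e β β' t, t ∈ M (e, β) → t ∈ J (e, β') → β = β' := by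
    intro e β β' t h h'
    have := ha e; have := hab e; have := hb e
    cases β <;> cases β' <;> simp [M, J] at h h' ⊢ <;> linarith [h.1, h.2, h'.1, h'.2]
  have hJv : ∀ i t, t ∈ J i → (t = 0 ∨ t = 1) → D.curve i.1 t = D.pos (v i) := by
    rintro ⟨e, β⟩ t ht h
    have := ha e; have := hab e; have := hb e
    cases β <;> simp only [J, v, Bool.false_eq_true, if_true, if_false, mem_Icc] at ht ⊢ <;>
      rcases h with rfl | rfl
    · exact hva e
    · exfalso; linarith [ht.1, ht.2]
    · exfalso; linarith [ht.1, ht.2]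
    · exact hvb e
  have hJv' : ∀ i, D.pos (v i) ∈ D.curve i.1 '' J i := by
    rintro ⟨e, β⟩
    have := ha e; have := hab e; have := hb e
    cases β <;> simp only [J, v, Bool.false_eq_true, if_true, if_false]
    · exact ⟨0, ⟨le_rfl, by linarith⟩, hva e⟩
    · exact ⟨1, ⟨by linarith, le_rfl⟩, hvb e⟩
  have hJcp : ∀ i, IsCompact (J i) ∧ IsPreconnected (J i) := by
    rintro ⟨e, β⟩
    cases β <;> simp only [J, Bool.false_eq_true, if_true, if_false] <;>
      exact ⟨isCompact_Icc, isPreconnected_Icc⟩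
  have hMcp : ∀ i, IsCompact (M i) ∧ IsPreconnected (M i) := by
    rintro ⟨e, β⟩
    cases β <;> simp only [M, Bool.false_eq_true, if_true, if_false] <;>
      exact ⟨isCompact_Icc, isPreconnected_Icc⟩
  have hcJ : ∀ i, ContinuousOn (D.curve i.1) (J i) := fun i =>
    (D.curve_cont i.1).mono fun t ht => (hJ01 i t ht).1
  have hcM : ∀ i, ContinuousOn (D.curve i.1) (M i) := fun i =>
    (D.curve_cont i.1).mono fun t ht => (hM01 i t ht).1
  have hcK : ∀ e, ContinuousOn (D.curve e) (Icc (a e) (b e)) := fun e =>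
    (D.curve_cont e).mono fun t ht => (hK01 e t ht).1
  let B : V ⊕ Set G.edgeSet → Set (ℝ × ℝ) := Sum.elim
    (fun w => ⋃ i ∈ {i | v i = w}, D.curve i.1 '' J i)
    (fun y => ⋃ e ∈ {e | x e = y}, D.curve e '' Icc (a e) (b e))
  have hBl : ∀ w p, p ∈ B (Sum.inl w) ↔ ∃ i t, v i = w ∧ t ∈ J i ∧ D.curve i.1 t = p := by
    intro w p
    simp only [B, Sum.elim_inl, mem_iUnion, exists_prop, mem_image]
    constructor
    · rintro ⟨i, h, t, h1, h2⟩; exact ⟨i, t, h, h1, h2⟩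
    · rintro ⟨i, t, h, h1, h2⟩; exact ⟨i, h, t, h1, h2⟩
  have hBr : ∀ y p, p ∈ B (Sum.inr y) ↔ ∃ e t, x e = y ∧ t ∈ Icc (a e) (b e) ∧
      D.curve e t = p := by
    intro w p
    simp only [B, Sum.elim_inr, mem_iUnion, exists_prop, mem_image]
    constructor
    · rintro ⟨i, h, t, h1, h2⟩; exact ⟨i, t, h, h1, h2⟩
    · rintro ⟨i, t, h, h1, h2⟩; exact ⟨i, h, t, h1, h2⟩
  -- curves of two edges meet only at common ends or inside the middle parts
  have hJ_no : ∀ i t, t ∈ J i → t ∉ crossParams D i.1 := fun i t ht h =>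
    (hJ01 i t ht).2 (Ioo_subset_Icc_self (hZ _ h))
  have hM_no : ∀ i t, t ∈ M i → t ∉ crossParams D i.1 := fun i t ht h =>
    (hM01 i t ht).2.1 (hZ _ h)
  have hlr : ∀ w y, Disjoint (B (Sum.inl w)) (B (Sum.inr y)) := by
    intro w y
    rw [Set.disjoint_left]
    intro p hp hp'
    rw [hBl] at hp
    rw [hBr] at hp'
    obtain ⟨i, t, rfl, ht, rfl⟩ := hp
    obtain ⟨f, u, rfl, hu, h⟩ := hp'
    by_cases hif : i.1 = f
    · subst hif
      have := D.curve_inj i.1 (hK01 _ _ hu).1 (hJ01 _ _ ht).1 h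
      subst this
      exact (hJ01 _ _ ht).2 hu
    · rcases curve_meet D hif (hJ01 _ _ ht).1 (hK01 _ _ hu).1 h.symm with h1 | h1
      · exact hJ_no i t ht h1.1
      · exact h1.2.elim (hK01 _ _ hu).2.1 (hK01 _ _ hu).2.2
  refine Exists.elim (exists_hypermap_of_compacts B
    (fun i => D.curve i.1 '' M i) v (fun i => x i.1) ?_ ?_ ?_ ?_ ?_ ?_ ?_ ?_ ?_) ?_
  · rintro (w | y)
    · exact Set.Finite.isCompact_biUnion (Set.toFinite _)
        fun i _ => (hJcp i).1.image_of_continuousOn (hcJ i)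
    · exact Set.Finite.isCompact_biUnion (Set.toFinite _)
        fun e _ => isCompact_Icc.image_of_continuousOn (hcK e)
  · exact fun i => (hMcp i).1.image_of_continuousOn (hcM i)
  · rintro (w | y)
    · refine preconnected_biUnion _ _ (fun i _ => (hJcp i).2.image _ (hcJ i)) ?_
      intro i hi j hj
      refine ⟨D.pos w, ?_, ?_⟩
      · rw [← (show v i = w from hi)]; exact hJv' i
      · rw [← (show v j = w from hj)]; exact hJv' j
    · refine preconnected_biUnion _ _ (fun e _ => isPreconnected_Icc.image _ (hcK e)) ?_
      intro e he f hf
      have hef : x e = x f := (show x e = y from he).trans (show x f = y from hf).symm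
      rcases (hx _ _).1 hef with rfl | hc
      · rw [inter_self]
        exact ⟨_, a e, ⟨le_rfl, (hab e).le⟩, rfl⟩
      · obtain ⟨hne, p, ⟨t, ht, rfl⟩, ⟨u, hu, h⟩⟩ := hc
        refine ⟨_, ⟨t, Ioo_subset_Icc_self (hZ e ⟨ht, f, hne.symm, u, hu, h⟩), rfl⟩, u, ?_, h⟩
        exact Ioo_subset_Icc_self (hZ f ⟨hu, e, hne, t, ht, h.symm⟩)
  · exact fun i => (hMcp i).2.image _ (hcM i)
  · rintro (w | y) (w' | y') hne
    · rw [Set.disjoint_left]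
      intro p hp hp'
      rw [hBl] at hp hp'
      obtain ⟨i, t, rfl, ht, rfl⟩ := hp
      obtain ⟨j, u, rfl, hu, h⟩ := hp'
      apply hne
      congr 1
      by_cases hij : i.1 = j.1
      · obtain ⟨e, β⟩ := i
        obtain ⟨f, β'⟩ := j
        dsimp only at hij h
        subst hij
        have := D.curve_inj e (hJ01 _ _ hu).1 (hJ01 _ _ ht).1 h
        subst this
        rw [hJJ e β β' u ht hu]
      · rcases curve_meet D hij (hJ01 _ _ ht).1 (hJ01 _ _ hu).1 h.symm with h1 | h1
        · exact absurd h1.1 (hJ_no i t ht)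
        · apply D.pos_inj
          rw [← hJv i t ht h1.1, ← hJv j u hu h1.2, h]
    · exact hlr w y'
    · exact (hlr w' y).symm
    · rw [Set.disjoint_left]
      intro p hp hp'
      rw [hBr] at hp hp'
      obtain ⟨e, t, rfl, ht, rfl⟩ := hp
      obtain ⟨f, u, rfl, hu, h⟩ := hp'
      apply hne
      congr 1
      by_cases hef : e = f
      · rw [hef]
      · rcases curve_meet D hef (hK01 _ _ ht).1 (hK01 _ _ hu).1 h.symm with h1 | h1
        · exact (hx e f).2 (Or.inr h1.2.2)
        · exact (h1.2.elim (hK01 _ _ hu).2.1 (hK01 _ _ hu).2.2).elim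
  · intro i j hij
    rw [Set.disjoint_left]
    rintro p ⟨t, ht, rfl⟩ ⟨u, hu, h⟩
    by_cases hij' : i.1 = j.1
    · obtain ⟨e, β⟩ := i
      obtain ⟨f, β'⟩ := j
      dsimp only at hij' h
      subst hij'
      have := D.curve_inj e (hM01 _ _ hu).1 (hM01 _ _ ht).1 h
      subst this
      exact hij (by rw [hMM e β β' u ht hu])
    · rcases curve_meet D hij' (hM01 _ _ ht).1 (hM01 _ _ hu).1 h.symm with h1 | h1
      · exact hM_no i t ht h1.1
      · exact h1.1.elim (hM01 _ _ ht).2.2.1 (hM01 _ _ ht).2.2.2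
  · rintro i (w | y) hw1 hw2
    · rw [Set.disjoint_left]
      rintro p ⟨t, ht, rfl⟩ hp
      rw [hBl] at hp
      obtain ⟨j, u, rfl, hu, h⟩ := hp
      by_cases hij' : i.1 = j.1
      · obtain ⟨e, β⟩ := i
        obtain ⟨f, β'⟩ := j
        dsimp only at hij' h
        subst hij'
        have := D.curve_inj e (hJ01 _ _ hu).1 (hM01 _ _ ht).1 h
        subst this
        exact hw1 (by rw [hMJ e β β' u ht hu])
      · rcases curve_meet D hij' (hM01 _ _ ht).1 (hJ01 _ _ hu).1 h.symm with h1 | h1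
        · exact hM_no i t ht h1.1
        · exact h1.1.elim (hM01 _ _ ht).2.2.1 (hM01 _ _ ht).2.2.2
    · rw [Set.disjoint_left]
      rintro p ⟨t, ht, rfl⟩ hp
      rw [hBr] at hp
      obtain ⟨f, u, rfl, hu, h⟩ := hp
      by_cases hif : i.1 = f
      · exact hw2 (by rw [hif])
      · rcases curve_meet D hif (hM01 _ _ ht).1 (hK01 _ _ hu).1 h.symm with h1 | h1
        · exact hM_no i t ht h1.1
        · exact h1.1.elim (hM01 _ _ ht).2.2.1 (hM01 _ _ ht).2.2.2
  · rintro ⟨e, β⟩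
    have := ha e; have := hab e; have := hb e
    cases β
    · refine ⟨D.curve e (a e / 2), ⟨a e / 2, ?_, rfl⟩, (hBl _ _).2 ⟨(e, false), a e / 2, rfl, ?_, rfl⟩⟩
      · simp only [M, Bool.false_eq_true, if_false]; constructor <;> linarith
      · simp only [J, Bool.false_eq_true, if_false]; constructor <;> linarith
    · refine ⟨D.curve e ((1 + b e) / 2), ⟨(1 + b e) / 2, ?_, rfl⟩,
        (hBl _ _).2 ⟨(e, true), (1 + b e) / 2, rfl, ?_, rfl⟩⟩
      · simp only [M, if_true]; constructor <;> linarith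
      · simp only [J, if_true]; constructor <;> linarith
  · rintro ⟨e, β⟩
    have := ha e; have := hab e; have := hb e
    cases β
    · refine ⟨D.curve e (a e), ⟨a e, ?_, rfl⟩, (hBr _ _).2 ⟨e, a e, rfl, ?_, rfl⟩⟩
      · simp only [M, Bool.false_eq_true, if_false]; constructor <;> linarith
      · constructor <;> linarith
    · refine ⟨D.curve e (b e), ⟨b e, ?_, rfl⟩, (hBr _ _).2 ⟨e, b e, rfl, ?_, rfl⟩⟩
      · simp only [M, if_true]; constructor <;> linarith
      · constructor <;> linarith
  · rintro s ⟨c, hdef, h1, h2, h3, h4⟩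
    refine ⟨v, x, s, c, fun e => ?_, fun e f g hf hg => ?_, hdef, h1, h2, h3, h4⟩
    · simp only [v, Bool.false_eq_true, if_true, if_false]
      exact hvab e
    · rcases (hx _ _).1 hf with h | h
      · exact Or.inr (Or.inl h)
      rcases (hx _ _).1 hg with h' | h'
      · exact Or.inr (Or.inr h')
      exact Or.inl (hD _ _ _ h h')

end

/-! ### Polygon maps -/

/-- A combinatorial planar map whose vertices are labelled by elements of `V`: the cycles of `σ`
are the vertices (one for each label in use), those of `α` the edges and those of `σ * α` the
faces. A dart `d` leads from `ℓ d` to `ℓ (α d)`. -/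
structure PMap (V D : Type*) where
  /-- the rotation around the vertices -/
  σ : Perm D
  /-- the reversal of darts -/
  α : Perm D
  /-- the starting vertex of a dart -/
  ℓ : D → V
  αα : ∀ d, α (α d) = d
  planar : defect σ α ≤ 0
  ℓσ : ∀ d, ℓ (σ d) = ℓ d
  same : ∀ x y, ℓ x = ℓ y → cls σ x = cls σ y

namespace PMap

variable {V D : Type*}

/-- The next dart along the same face. -/
def φ (M : PMap V D) : Perm D := M.σ * M.α

theorem φ_apply (M : PMap V D) (d : D) : M.φ d = M.σ (M.α d) := rfl

theorem ℓφ (M : PMap V D) (d : D) : M.ℓ (M.φ d) = M.ℓ (M.α d) := by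
  rw [φ_apply, M.ℓσ]

/-- The face at the dart `d` is a quadrangle with vertices coloured `A, A, B, B` in order,
starting from `d`, the two equally coloured pairs consisting of distinct vertices. Such a face
may carry its two diagonals as a pair of crossing edges. -/
def Quad (M : PMap V D) (col : V → Bool) (d : D) : Prop :=
  M.φ (M.φ (M.φ (M.φ d))) = d ∧ col (M.ℓ (M.φ d)) = col (M.ℓ d) ∧
    col (M.ℓ (M.φ (M.φ d))) ≠ col (M.ℓ d) ∧ col (M.ℓ (M.φ (M.φ (M.φ d)))) ≠ col (M.ℓ d) ∧
    M.ℓ (M.φ d) ≠ M.ℓ d ∧ M.ℓ (M.φ (M.φ (M.φ d))) ≠ M.ℓ (M.φ (M.φ d))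

/-- The pair `a, b` is joined by a side of the map, or by a diagonal of a quadrangle. -/
def Realized (M : PMap V D) (col : V → Bool) (a b : V) : Prop :=
  (∃ d, M.ℓ d = a ∧ M.ℓ (M.α d) = b) ∨
    ∃ d, M.Quad col d ∧ ((M.ℓ d = a ∧ M.ℓ (M.φ (M.φ d)) = b) ∨
      (M.ℓ (M.φ d) = a ∧ M.ℓ (M.φ (M.φ (M.φ d))) = b))

theorem Quad.two {M : PMap V D} {col : V → Bool} {d : D} (h : M.Quad col d) :
    M.Quad col (M.φ (M.φ d)) := by
  obtain ⟨h1, h2, h3, h4, h5, h6⟩ := h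
  refine ⟨by rw [h1], ?_, ?_, ?_, h6, ?_⟩
  · revert h3 h4
    cases col (M.ℓ d) <;> cases col (M.ℓ (M.φ (M.φ d))) <;>
      cases col (M.ℓ (M.φ (M.φ (M.φ d)))) <;> simp
  · rw [h1]; exact h3.symm
  · rw [h1, h2]; exact h3.symm
  · rw [h1]; exact h5

theorem Realized.symm {M : PMap V D} {col : V → Bool} {a b : V} (h : M.Realized col a b) :
    M.Realized col b a := by
  rcases h with ⟨d, h1, h2⟩ | ⟨d, hd, ⟨h1, h2⟩ | ⟨h1, h2⟩⟩
  · exact Or.inl ⟨M.α d, h2, by rw [M.αα]; exact h1⟩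
  · exact Or.inr ⟨_, hd.two, Or.inl ⟨h2, by rw [hd.1]; exact h1⟩⟩
  · exact Or.inr ⟨_, hd.two, Or.inr ⟨h2, by rw [hd.1]; exact h1⟩⟩

/-- Deleting all loops of a polygon map. -/
theorem exists_noLoop [Finite D] (M : PMap V D) (col : V → Bool) :
    ∃ (K : Set D) (N : PMap V K), (∀ d, N.ℓ (N.α d) ≠ N.ℓ d) ∧
      ∀ a b, col a ≠ col b → M.Realized col a b → N.Realized col a b := by
  classical
  let K : Set D := {d | M.ℓ (M.α d) ≠ M.ℓ d}
  have hK : ∀ d, d ∈ K ↔ M.ℓ (M.α d) ≠ M.ℓ d := fun d => Iff.rfl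
  obtain ⟨σJ, αJ, hpl, hα, hσ, -, hc1, hc2⟩ := exists_delete (Subtype.val : K → D)
    Subtype.val_injective M.σ M.α (fun x => ⟨⟨M.α x, by
      have := (hK x).1 x.2
      rw [hK, M.αα]; exact this.symm⟩, rfl⟩) M.planar
  let N : PMap V K :=
    { σ := σJ
      α := αJ
      ℓ := fun x => M.ℓ x
      αα := fun d => Subtype.ext (by rw [hα, hα, M.αα])
      planar := hpl
      ℓσ := fun d => eq_of_cls_eq (hc2 d) _ M.ℓσ
      same := fun x y h => hc1 x y (M.same _ _ h) }
  have hφ : ∀ (x : K) (y : D) (hy : y ∈ K), M.φ x = y → N.φ x = ⟨y, hy⟩ := by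
    intro x y hy h
    refine hσ (αJ x) ⟨y, hy⟩ ?_
    rw [hα]; exact h
  refine ⟨K, N, fun d => ?_, ?_⟩
  · change M.ℓ (αJ d) ≠ M.ℓ d
    rw [hα]; exact d.2
  · rintro a b hab (⟨d, rfl, rfl⟩ | ⟨d, hd, h⟩)
    · refine Or.inl ⟨⟨d, fun h => hab (by rw [h])⟩, rfl, ?_⟩
      change M.ℓ (αJ _) = _
      rw [hα]
    · obtain ⟨h1, h2, h3, h4, h5, h6⟩ := hd
      have k0 : d ∈ K := by rw [hK, ← M.ℓφ]; exact h5
      have k1 : M.φ d ∈ K := by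
        rw [hK, ← M.ℓφ]
        intro h; rw [h, h2] at h3; exact h3 rfl
      have k2 : M.φ (M.φ d) ∈ K := by rw [hK, ← M.ℓφ]; exact h6
      have k3 : M.φ (M.φ (M.φ d)) ∈ K := by
        rw [hK, ← M.ℓφ, h1]
        intro h; rw [h] at h4; exact h4 rfl
      have e0 := hφ ⟨d, k0⟩ _ k1 rfl
      have e1 := hφ ⟨_, k1⟩ _ k2 rfl
      have e2 := hφ ⟨_, k2⟩ _ k3 rfl
      have e3 := hφ ⟨_, k3⟩ _ k0 h1
      refine Or.inr ⟨⟨d, k0⟩, ?_, ?_⟩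
      · simp only [Quad, e0, e1, e2, e3]
        exact ⟨trivial, h2, h3, h4, h5, h6⟩
      · simp only [e0, e1, e2]
        exact h

/-- In a loopless polygon map, one side of a face with two sides can be deleted; its role is then
taken by the other side. -/
theorem exists_noDigon_step [Finite D] (M : PMap V D) (col : V → Bool)
    (hM : ∀ d, M.ℓ (M.α d) ≠ M.ℓ d) (d : D) (hd : M.φ (M.φ d) = d) (hd' : M.φ d ≠ M.α d) :
    ∃ (K : Set D) (N : PMap V K), K ≠ univ ∧ (∀ d, N.ℓ (N.α d) ≠ N.ℓ d) ∧
      ∀ a b, M.Realized col a b → N.Realized col a b := by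
  classical
  have hφφ : ∀ z, M.φ z ≠ z := fun z h => hM z (by rw [← M.ℓφ, h])
  have hαz : ∀ z, M.α z ≠ z := fun z h => hM z (by rw [h])
  obtain ⟨e, he⟩ : ∃ e, e = M.φ d := ⟨_, rfl⟩
  have hed : e ≠ d := he ▸ hφφ d
  have hea : e ≠ M.α d := he ▸ hd'
  have hφe : M.φ e = d := by rw [he, hd]
  let K : Set D := {x | x ≠ d ∧ x ≠ M.α d}
  have hK : ∀ x, x ∈ K ↔ x ≠ d ∧ x ≠ M.α d := fun x => Iff.rfl
  have hKα : ∀ x ∈ K, M.α x ∈ K := by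
    intro x hx
    rw [hK] at hx ⊢
    exact ⟨fun h => hx.2 (by rw [← h, M.αα]), fun h => hx.1 (M.α.injective h)⟩
  have heK : e ∈ K := ⟨hed, hea⟩
  obtain ⟨σJ, αJ, hpl, hα, hσ, hσ2, hc1, hc2⟩ := exists_delete (Subtype.val : K → D)
    Subtype.val_injective M.σ M.α (fun x => ⟨⟨M.α x, hKα x x.2⟩, rfl⟩) M.planar
  let N : PMap V K :=
    { σ := σJ
      α := αJ
      ℓ := fun x => M.ℓ x
      αα := fun d => Subtype.ext (by rw [hα, hα, M.αα])
      planar := hpl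
      ℓσ := fun d => eq_of_cls_eq (hc2 d) _ M.ℓσ
      same := fun x y h => hc1 x y (M.same _ _ h) }
  have hφ1 : ∀ (x y : K), M.φ x = y → N.φ x = y := by
    intro x y h
    refine hσ (αJ x) y ?_
    rw [hα]; exact h
  have hφ2 : ∀ (x y : K), M.φ x ∉ K → M.σ (M.φ x) = y → N.φ x = y := by
    intro x y h hy
    refine hσ2 (αJ x) y ?_ ?_
    · rw [hα, Subtype.range_val]; exact h
    · rw [hα]; exact hy
  -- the dart `α d` is replaced by `e`, and `d` by `α e`
  let r : D → K := fun z => if h : z ∈ K then ⟨z, h⟩ else if z = d then ⟨M.α e, hKα e heK⟩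
    else ⟨e, heK⟩
  have hrK : ∀ z (h : z ∈ K), r z = ⟨z, h⟩ := fun z h => by simp only [r, dif_pos h]
  have hdK : d ∉ K := fun h => ((hK d).1 h).1 rfl
  have hadK : M.α d ∉ K := fun h => ((hK _).1 h).2 rfl
  have hrd : r d = ⟨M.α e, hKα e heK⟩ := by simp only [r, dif_neg hdK, if_true]
  have hra : r (M.α d) = ⟨e, heK⟩ := by simp only [r, dif_neg hadK, if_neg (hαz d)]
  have hle : M.ℓ e = M.ℓ (M.α d) := by rw [he, M.ℓφ]
  have hlae : M.ℓ (M.α e) = M.ℓ d := by rw [← M.ℓφ, hφe]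
  have hcases : ∀ z, z ∈ K ∨ z = d ∨ z = M.α d := by
    intro z
    by_cases h1 : z = d
    · exact Or.inr (Or.inl h1)
    by_cases h2 : z = M.α d
    · exact Or.inr (Or.inr h2)
    exact Or.inl ⟨h1, h2⟩
  have hrl : ∀ z, N.ℓ (r z) = M.ℓ z := by
    intro z
    change M.ℓ (r z) = _
    rcases hcases z with h | rfl | rfl
    · rw [hrK z h]
    · rw [hrd, hlae]
    · rw [hra, hle]
  have hrla : ∀ z, N.ℓ (N.α (r z)) = M.ℓ (M.α z) := by
    intro z
    change M.ℓ (αJ (r z)) = _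
    rw [hα]
    rcases hcases z with h | rfl | rfl
    · rw [hrK z h]
    · rw [hrd]; simp only [M.αα, hle]
    · rw [hra, M.αα, hlae]
  have hrφ : ∀ z, z ≠ d → z ≠ e → N.φ (r z) = r (M.φ z) := by
    intro z hzd hze
    rcases hcases z with h | rfl | rfl
    · rw [hrK z h]
      rcases hcases (M.φ z) with h' | h' | h'
      · rw [hrK _ h']
        exact hφ1 _ _ rfl
      · exact absurd (M.φ.injective (h'.trans hφe.symm)) hze
      · rw [h', hra]
        refine hφ2 _ _ (by rw [h']; exact hadK) ?_
        rw [h']; exact he.symm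
    · exact absurd rfl hzd
    · have hk : M.φ (M.α d) ∈ K :=
        ⟨fun h => hea (M.φ.injective (hφe.trans h.symm)), hφφ _⟩
      rw [hra, hrK _ hk]
      refine hφ2 _ _ (by rw [hφe]; exact hdK) ?_
      rw [hφe]
      change M.σ d = M.σ (M.α (M.α d))
      rw [M.αα]
  refine ⟨K, N, fun h => hdK (h ▸ mem_univ d), fun x => ?_, ?_⟩
  · change M.ℓ (αJ x) ≠ M.ℓ x
    rw [hα]; exact hM x
  · rintro a b (⟨z, rfl, rfl⟩ | ⟨z, hz, h⟩)
    · exact Or.inl ⟨r z, hrl z, hrla z⟩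
    · have hne : M.φ (M.φ z) ≠ z := fun h => hz.2.2.1 (by rw [h])
      have hgen : ∀ z, M.φ (M.φ z) ≠ z → z ≠ d ∧ z ≠ e := by
        intro z h
        refine ⟨fun hzd => h (by rw [hzd, hd]), fun hze => h ?_⟩
        rw [hze, hφe, he]
      have hne' : ∀ z, M.φ (M.φ z) ≠ z → M.φ (M.φ (M.φ z)) ≠ M.φ z :=
        fun z h h' => h (M.φ.injective h')
      have k0 := hgen _ hne
      have k1 := hgen _ (hne' _ hne)
      have k2 := hgen _ (hne' _ (hne' _ hne))
      have k3 := hgen _ (hne' _ (hne' _ (hne' _ hne)))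
      have e0 := hrφ _ k0.1 k0.2
      have e1 := hrφ _ k1.1 k1.2
      have e2 := hrφ _ k2.1 k2.2
      have e3 := hrφ _ k3.1 k3.2
      obtain ⟨h1, h2⟩ := hz
      refine Or.inr ⟨r z, ?_, ?_⟩
      · simp only [Quad, e0, e1, e2, e3, hrl]
        exact ⟨by rw [h1], h2⟩
      · simp only [e0, e1, e2, hrl]
        exact h

/-- A loopless polygon map can be reduced until no face has two sides, except for isolated
edges. -/
theorem exists_noDigon {V : Type*} (n : ℕ) : ∀ {D : Type u} [Finite D] (M : PMap V D) (col : V → Bool)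
    (_ : ∀ d, M.ℓ (M.α d) ≠ M.ℓ d) (_ : Nat.card D = n),
    ∃ (D' : Type u) (_ : Finite D') (N : PMap V D'),
      (∀ d, N.ℓ (N.α d) ≠ N.ℓ d) ∧ (∀ d, N.φ (N.φ d) = d → N.φ d = N.α d) ∧
      ∀ a b, M.Realized col a b → N.Realized col a b := by
  induction n using Nat.strong_induction_on with
  | _ n ih =>
    intro D _ M col hM hn
    by_cases h : ∀ d, M.φ (M.φ d) = d → M.φ d = M.α d
    · exact ⟨D, ‹_›, M, hM, h, fun _ _ => id⟩
    · push Not at h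
      obtain ⟨d, hd, hd'⟩ := h
      obtain ⟨K, N, hK, hN, hr⟩ := M.exists_noDigon_step col hM d hd hd'
      have hlt : Nat.card K < n := by
        rw [← hn, Nat.card_coe_set_eq]
        rw [← Set.ncard_univ]
        exact Set.ncard_lt_ncard (Set.ssubset_univ_iff.2 hK)
      obtain ⟨D', hf, N', h1, h2, h3⟩ := ih _ hlt N col hN rfl
      exact ⟨D', hf, N', h1, h2, fun a b hab => h3 a b (hr a b hab)⟩

end PMap

/-- The map of the polygons formed by the ends around each crossing (and around each uncrossed
edge, where the polygon is a digon). The dart `inl i` is the side of the polygon following the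
half-edge `i`, and `inr i` is its reverse. -/
theorem exists_polygons {V I : Type*} [Finite I] (v : I → V) (s c : Perm I)
    (hsc : defect s c ≤ 0) (hv : ∀ i, v (s i) = v i) (hs : ∀ i j, v i = v j → cls s i = cls s j) :
    ∃ M : PMap V (I ⊕ I), (∀ i, M.φ (Sum.inl i) = Sum.inl (c i)) ∧ (∀ i, M.ℓ (Sum.inl i) = v i) := by
  let ψ : Perm (I ⊕ I) := Equiv.sumCongr c (s * c)⁻¹
  let α : Perm (I ⊕ I) := Equiv.sumComm I I
  have hαα : α * α = 1 := by
    ext x; rcases x with x | x <;> rfl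
  have hψ : defect c (s * c)⁻¹ = defect ψ α :=
    defect_bipartite ψ α c (s * c)⁻¹ (fun i => ⟨rfl, rfl⟩) (fun i => ⟨rfl, rfl⟩)
  have hle : defect c (s * c)⁻¹ ≤ defect s c := by
    have h1 : comps c (s * c)⁻¹ ≤ comps s c := by
      refine natCard_quot_le_of_imp ?_
      have hc : ∀ x, Quot.mk (fun x y => c x = y ∨ (s * c)⁻¹ x = y) (c x) = Quot.mk _ x :=
        fun x => (Quot.sound (r := fun x y => c x = y ∨ (s * c)⁻¹ x = y) (Or.inl rfl)).symm
      rintro x y (rfl | rfl)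
      · have h2 : (s * c)⁻¹ (s x) = c⁻¹ x := by simp
        have h3 := Quot.sound (r := fun x y => c x = y ∨ (s * c)⁻¹ x = y) (a := s x)
          (b := c⁻¹ x) (Or.inr h2)
        rw [h3, ← hc (c⁻¹ x)]
        simp
      · exact (hc x).symm
    have h2 : c * (s * c)⁻¹ = s⁻¹ := by group
    simp only [defect]
    rw [h2, cyc_inv, cyc_inv]
    have h3 : (comps c (s * c)⁻¹ : ℤ) ≤ comps s c := by exact_mod_cast h1
    linarith
  let σ : Perm (I ⊕ I) := ψ * α
  let ℓ : I ⊕ I → V := Sum.elim v fun i => v (c i)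
  have hσl : ∀ i, σ (Sum.inl i) = Sum.inr ((s * c)⁻¹ i) := fun i => rfl
  have hσr : ∀ i, σ (Sum.inr i) = Sum.inl (c i) := fun i => rfl
  have hclsr : ∀ i, cls σ (Sum.inr i) = cls σ (Sum.inl (c i)) := by
    intro i
    rw [← hσr, cls_apply]
  have hclsl : ∀ i j, v i = v j → cls σ (Sum.inl i : I ⊕ I) = cls σ (Sum.inl j) := by
    intro i j hij
    refine eq_of_cls_eq (hs i j hij) (fun i => cls σ (Sum.inl i : I ⊕ I)) fun z => ?_
    have h1 : σ (σ (Sum.inl (s z))) = Sum.inl z := by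
      rw [hσl, hσr]; simp
    rw [← cls_apply, ← cls_apply, h1]
  let M : PMap V (I ⊕ I) :=
    { σ := σ
      α := α
      ℓ := ℓ
      αα := fun d => by rcases d with d | d <;> rfl
      planar := by
        rw [defect_dual ψ α hαα, ← hψ]
        exact hle.trans hsc
      ℓσ := by
        rintro (i | i)
        · rw [hσl]
          change v (c ((s * c)⁻¹ i)) = v i
          rw [← hv]
          congr 1
          simp
        · rfl
      same := by
        rintro (i | i) (j | j) h
        · exact hclsl _ _ h
        · rw [hclsr]; exact hclsl _ _ h
        · rw [hclsr]; exact hclsl _ _ h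
        · rw [hclsr, hclsr]; exact hclsl _ _ h }
  refine ⟨M, fun i => ?_, fun i => rfl⟩
  change σ (α (Sum.inl i)) = _
  exact hσr i

/-- Every bipartite almost planar graph is realized by the sides of a planar map without loops
and without digons (other than isolated edges), together with the diagonals of quadrangular faces. -/
theorem exists_map_of_almostPlanar {V : Type u} [Finite V] {G : SimpleGraph V}
    (hap : G.AlmostPlanar) (col : V → Bool) (hcol : ∀ a b, G.Adj a b → col a ≠ col b) :
    ∃ (D : Type u) (_ : Finite D) (M : PMap V D),
      (∀ d, M.ℓ (M.α d) ≠ M.ℓ d) ∧ (∀ d, M.φ (M.φ d) = d → M.φ d = M.α d) ∧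
      ∀ a b, G.Adj a b → M.Realized col a b := by
  obtain ⟨Dr, hDr⟩ := hap
  obtain ⟨v, x, s, c, hve, hx, hdef, hvs, hxc, hs, hc⟩ := exists_hypermap_of_drawing Dr hDr
  obtain ⟨M, hφ, hℓ⟩ := exists_polygons v s c hdef hvs hs
  have hadj : ∀ e : G.edgeSet, G.Adj (v (e, false)) (v (e, true)) := by
    intro e
    rw [← SimpleGraph.mem_edgeSet, ← hve e]
    exact e.2
  have hℓα : ∀ i, M.ℓ (M.α (Sum.inl i)) = v (c i) := by
    intro i
    rw [← M.ℓφ, hφ, hℓ]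
  have key : ∀ e : G.edgeSet, M.Realized col (v (e, false)) (v (e, true)) := by
    intro e
    obtain ⟨i, hi⟩ : ∃ i, i = (e, false) := ⟨_, rfl⟩
    obtain ⟨j, hj⟩ : ∃ j, j = (e, true) := ⟨_, rfl⟩
    have hij : i ≠ j := by rw [hi, hj]; simp
    have hcolij : col (v i) ≠ col (v j) := by rw [hi, hj]; exact hcol _ _ (hadj e)
    rw [← hi, ← hj]
    have hcls : cls c i = cls c j := hc _ _ (by rw [hi, hj])
    have side : ∀ k, v k = v i → v (c k) = v j → M.Realized col (v i) (v j) :=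
      fun k h1 h2 => Or.inl ⟨Sum.inl k, by rw [hℓ, h1], by rw [hℓα, h2]⟩
    have side' : ∀ k, v k = v j → v (c k) = v i → M.Realized col (v i) (v j) :=
      fun k h1 h2 => PMap.Realized.symm (Or.inl ⟨Sum.inl k, by rw [hℓ, h1], by rw [hℓα, h2]⟩)
    by_cases h1 : c i = j
    · exact side i rfl (by rw [h1])
    by_cases h2 : c j = i
    · exact side' j rfl (by rw [h2])
    -- the remaining two half-edges at the crossing of `e`
    have hpow : ∀ (P : G.edgeSet × Bool → Prop), P i → (∀ z, P z → P (c z)) → P j := by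
      intro P h0 hstep
      obtain ⟨n, hn⟩ := sameCycle_of_cls_eq hcls
      have : ∀ n, P ((c ^ n) i) := by
        intro n
        induction n with
        | zero => exact h0
        | succ n ih => rw [pow_succ', Perm.mul_apply]; exact hstep _ ih
      rw [← hn]; exact this n
    have hci : c i ≠ i := fun h => hij (hpow (fun z => z = i) rfl (by rintro z rfl; exact h)).symm
    have hcj : c j ≠ j := by
      intro h
      have := c.injective.ne hij
      have h3 : ∀ n, (c ^ n) i ≠ j := by
        intro n
        induction n with
        | zero => exact hij
        | succ n ih =>
          rw [pow_succ', Perm.mul_apply]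
          intro h'
          exact ih (c.injective (h'.trans h.symm))
      obtain ⟨n, hn⟩ := sameCycle_of_cls_eq hcls
      exact h3 n hn
    obtain ⟨k, hk⟩ : ∃ k, c i = k := ⟨_, rfl⟩
    obtain ⟨m, hm⟩ : ∃ m, c j = m := ⟨_, rfl⟩
    have hfst : ∀ z : G.edgeSet × Bool, z.1 = e → z = i ∨ z = j := by
      rintro ⟨z, β⟩ rfl
      rw [hi, hj]
      cases β <;> simp
    have hkm : k ≠ m := by rw [← hk, ← hm]; exact c.injective.ne hij
    have hke : k.1 ≠ e := by
      intro h
      rcases hfst k h with h | h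
      · exact hci (hk.trans h)
      · exact h1 (hk.trans h)
    have hme : m.1 ≠ e := by
      intro h
      rcases hfst m h with h | h
      · exact h2 (hm.trans h)
      · exact hcj (hm.trans h)
    have hxk : x e = x k.1 := by
      rw [← hk, hxc, hi]
    have hxm : x e = x m.1 := by
      rw [← hm, hxc, hj]
    have hkmf : k.1 = m.1 := by
      rcases hx _ _ _ hxk hxm with h | h | h
      · exact h
      · exact absurd h.symm hke
      · exact absurd h.symm hme
    have hall : ∀ z : G.edgeSet × Bool, x e = x z.1 → z = i ∨ z = j ∨ z = k ∨ z = m := by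
      intro z hz
      rcases hx _ _ _ hxk hz with h | h | h
      · obtain ⟨k1, β⟩ := k
        obtain ⟨m1, β'⟩ := m
        obtain ⟨z1, β''⟩ := z
        dsimp only at h hkmf
        subst h
        subst hkmf
        right; right
        cases β <;> cases β' <;> cases β'' <;> simp at hkm ⊢
      · exact absurd h.symm hke
      · rcases hfst z h.symm with h | h
        · exact Or.inl h
        · exact Or.inr (Or.inl h)
    have hck : c k = j := by
      rcases hall (c k) (by rw [hxc, hxk]) with h | h | h | h
      · exfalso
        rcases hpow (fun z => z = i ∨ z = k) (Or.inl rfl) (by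
          rintro z (rfl | rfl)
          · exact Or.inr hk
          · exact Or.inl h) with h' | h'
        · exact hij h'.symm
        · exact h1 (hk.trans h'.symm)
      · exact h
      · exact absurd (c.injective (hk.trans h.symm)) (fun h' => hke (by rw [← h', hi]))
      · exact absurd (c.injective (hm.trans h.symm)) (fun h' => hke (by rw [← h', hj]))
    have hcm : c m = i := by
      rcases hall (c m) (by rw [hxc, hxm]) with h | h | h | h
      · exact h
      · exact absurd (c.injective (hck.trans h.symm)) hkm
      · exact absurd (c.injective (hk.trans h.symm)) (fun h' => hme (by rw [← h', hi]))
      · exact absurd (c.injective (hm.trans h.symm)) (fun h' => hme (by rw [← h', hj]))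
    have hcolkm : col (v k) ≠ col (v m) := by
      have h3 := hcol _ _ (hadj k.1)
      obtain ⟨k1, β⟩ := k
      obtain ⟨m1, β'⟩ := m
      dsimp only at hkmf h3
      subst hkmf
      cases β <;> cases β' <;> first | exact absurd rfl hkm | exact h3 | exact h3.symm
    have hb : ∀ p q r : Bool, p ≠ q → p ≠ r → q = r := by decide
    -- The half-edges at the crossing follow each other in the order `i, k, j, m`; the two cases are
    -- the two ways in which the colours can be arranged.
    by_cases hki : col (v k) = col (v i)
    · by_cases e1 : v k = v i
      · exact side k e1 (by rw [hck])
      by_cases e2 : v m = v j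
      · exact side' m e2 (by rw [hcm])
      refine Or.inr ⟨Sum.inl i, ?_, Or.inl ?_⟩
      · simp only [PMap.Quad, hφ, hℓ, hk, hck, hm, hcm]
        exact ⟨trivial, hki, hcolij.symm, fun h => hcolkm (hki.trans h.symm), e1, e2⟩
      · simp only [hφ, hℓ, hk, hck]
        exact ⟨trivial, trivial⟩
    · have hkj : col (v k) = col (v j) := hb _ _ _ (Ne.symm hki) hcolij
      by_cases e1 : v k = v j
      · exact side i rfl (by rw [hk, e1])
      by_cases e2 : v m = v i
      · exact side' j rfl (by rw [hm, e2])
      refine PMap.Realized.symm (Or.inr ⟨Sum.inl k, ?_, Or.inr ?_⟩)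
      · simp only [PMap.Quad, hφ, hℓ, hk, hck, hm, hcm]
        exact ⟨trivial, hkj.symm, hcolkm.symm, Ne.symm hki, Ne.symm e1, Ne.symm e2⟩
      · simp only [hφ, hℓ, hck, hm, hcm]
        exact ⟨trivial, trivial⟩
  have hadjR : ∀ a b, G.Adj a b → M.Realized col a b := by
    intro a b hab
    obtain ⟨e, he⟩ : ∃ e : G.edgeSet, (e : Sym2 V) = s(a, b) := ⟨⟨s(a, b), hab⟩, rfl⟩
    have h := key e
    have h' := he.symm.trans (hve e)
    rcases Sym2.eq_iff.1 h' with ⟨h1, h2⟩ | ⟨h1, h2⟩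
    · rw [h1, h2]; exact h
    · rw [h1, h2]; exact h.symm
  obtain ⟨K, N, hN, hNr⟩ := M.exists_noLoop col
  obtain ⟨D', hf, N', g1, g2, g3⟩ := PMap.exists_noDigon _ N col hN rfl
  exact ⟨D', hf, N', g1, g2, fun a b hab => g3 _ _ (hNr _ _ (hcol _ _ hab) (hadjR _ _ hab))⟩

/-! ### Counting in the polygon map -/

/-- Summation over the cycles of a permutation. -/
theorem sum_over_cycles {D : Type*} [Fintype D] [DecidableEq D] (φ : Perm D) (w : D → ℤ) (C : ℤ)
    (T : D → Finset D) (hT : ∀ d, ∀ x ∈ T d, cls φ x = cls φ d) (hw0 : ∀ d, 0 ≤ w d)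
    (hw : ∀ d, C ≤ ∑ x ∈ T d, w x) :
    C * cyc φ ≤ ∑ d, w d ∧ ∀ d₀, C < ∑ x ∈ T d₀, w x → C * cyc φ < ∑ d, w d := by
  classical
  have : Fintype (Quot fun x y => φ x = y) := Fintype.ofFinite _
  have hsum : ∑ d, w d = ∑ q, ∑ d with cls φ d = q, w d :=
    (Finset.sum_fiberwise Finset.univ (cls φ) w).symm
  have hC : C * cyc φ = ∑ _q : Quot fun x y => φ x = y, C := by
    rw [Finset.sum_const, Finset.card_univ, cyc, Nat.card_eq_fintype_card, nsmul_eq_mul, mul_comm]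
  have hge : ∀ d₀, ∑ x ∈ T d₀, w x ≤ ∑ d with cls φ d = cls φ d₀, w d := by
    intro d₀
    refine Finset.sum_le_sum_of_subset_of_nonneg ?_ fun d _ _ => hw0 d
    intro x hx
    exact Finset.mem_filter.2 ⟨Finset.mem_univ _, hT _ _ hx⟩
  have hq : ∀ q, C ≤ ∑ d with cls φ d = q, w d := by
    intro q
    induction q using Quot.ind with
    | _ d => exact (hw d).trans (hge d)
  rw [hsum, hC]
  refine ⟨Finset.sum_le_sum fun q _ => hq q, fun d₀ h => ?_⟩
  exact Finset.sum_lt_sum (fun q _ => hq q) ⟨cls φ d₀, Finset.mem_univ _, h.trans_le (hge d₀)⟩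

namespace PMap

variable {V D : Type*}

/-- The two ends of the dart have the same colour. -/
def Mono (M : PMap V D) (col : V → Bool) (d : D) : Prop := col (M.ℓ (M.α d)) = col (M.ℓ d)

/-- Neither of the darts `y` and `σ y`, which are consecutive around a vertex, is
monochromatic. -/
def Corner (M : PMap V D) (col : V → Bool) (y : D) : Prop :=
  ¬ M.Mono col y ∧ ¬ M.Mono col (M.σ y)

/-- The edge of `y` lies between two quadrangles, and the starting vertex of `y` has degree two
in the map. -/
def Serving (M : PMap V D) (col : V → Bool) (y : D) : Prop :=
  M.Quad col y ∧ M.Quad col (M.α y) ∧ M.σ (M.σ y) = y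

/-- The standing assumptions: a map without loops and digons that realizes a bipartite graph of
minimum degree at least three. -/
structure Good (M : PMap V D) (col : V → Bool) (G : SimpleGraph V) : Prop where
  noLoop : ∀ d, M.ℓ (M.α d) ≠ M.ℓ d
  noDigon : ∀ d, M.φ (M.φ d) = d → M.φ d = M.α d
  real : ∀ a b, G.Adj a b → M.Realized col a b
  hcol : ∀ a b, G.Adj a b → col a ≠ col b
  deg : ∀ v a b, ∃ c, G.Adj v c ∧ c ≠ a ∧ c ≠ b

variable {M : PMap V D} {col : V → Bool} {G : SimpleGraph V}

theorem mono_α (d : D) : M.Mono col (M.α d) ↔ M.Mono col d := by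
  rw [Mono, Mono, M.αα]
  exact eq_comm

theorem mono_iff (d : D) : M.Mono col d ↔ col (M.ℓ (M.φ d)) = col (M.ℓ d) := by
  rw [Mono, M.ℓφ]

theorem Quad.mono {d : D} (h : M.Quad col d) : M.Mono col d := (mono_iff d).2 h.2.1

theorem Quad.not_mono {d : D} (h : M.Quad col d) : ¬ M.Mono col (M.φ d) := by
  rw [mono_iff, h.2.1]
  exact h.2.2.1

/-- The neighbours of a vertex of the graph, as seen in the map. -/
theorem Good.nbr (hG : Good M col G) {v b : V} (h : G.Adj v b) :
    (∃ y, M.ℓ y = v ∧ ¬ M.Mono col y ∧ M.ℓ (M.α y) = b) ∨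
      ∃ y, M.ℓ y = v ∧ (M.Quad col y ∨ M.Quad col (M.φ⁻¹ y)) ∧ M.ℓ (M.φ (M.φ y)) = b := by
  rcases hG.real v b h with ⟨d, h1, h2⟩ | ⟨d, hd, ⟨h1, h2⟩ | ⟨h1, h2⟩⟩
  · refine Or.inl ⟨d, h1, ?_, h2⟩
    rw [Mono, h1, h2]
    exact (hG.hcol _ _ h).symm
  · exact Or.inr ⟨d, h1, Or.inl hd, h2⟩
  · exact Or.inr ⟨M.φ d, h1, Or.inr (by simpa using hd), h2⟩

theorem Good.exists_dart (hG : Good M col G) (v : V) : ∃ y, M.ℓ y = v := by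
  obtain ⟨c, hc, -⟩ := hG.deg v v v
  rcases hG.nbr hc with ⟨y, hy, -⟩ | ⟨y, hy, -⟩ <;> exact ⟨y, hy⟩

theorem mem_orbit [Finite D] {y z : D} (h : M.ℓ z = M.ℓ y) (P : D → Prop) (h0 : P y)
    (hs : ∀ x, P x → P (M.σ x)) : P z := by
  obtain ⟨n, hn⟩ := sameCycle_of_cls_eq (M.same _ _ h.symm)
  rw [← hn]
  clear hn
  induction n with
  | zero => exact h0
  | succ n ih => rw [pow_succ', Perm.mul_apply]; exact hs _ ih

/-- A vertex met by a single dart would have at most two neighbours in the graph. -/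
theorem Good.σ_ne [Finite D] (hG : Good M col G) (y : D) : M.σ y ≠ y := by
  intro h
  obtain ⟨c, hc, h1, h2⟩ := hG.deg (M.ℓ y) (M.ℓ (M.α y)) (M.ℓ (M.φ (M.φ y)))
  have hu : ∀ z, M.ℓ z = M.ℓ y → z = y := fun z hz =>
    mem_orbit hz (fun z => z = y) rfl (by rintro x rfl; exact h)
  rcases hG.nbr hc with ⟨z, hz, -, hb⟩ | ⟨z, hz, -, hb⟩
  · rw [hu z hz] at hb; exact h1 hb.symm
  · rw [hu z hz] at hb; exact h2 hb.symm

/-- A vertex of degree two in the map with exactly one monochromatic dart has a third neighbour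
in the graph only if both of its corners lie in quadrangles. -/
theorem Good.serving [Finite D] (hG : Good M col G) {y : D} (hy : M.Mono col y)
    (hy' : ¬ M.Mono col (M.σ y)) (hσ : M.σ (M.σ y) = y) : M.Serving col y := by
  have hu : ∀ z, M.ℓ z = M.ℓ y → z = y ∨ z = M.σ y := fun z hz =>
    mem_orbit hz (fun z => z = y ∨ z = M.σ y) (Or.inl rfl) (by
      rintro x (rfl | rfl)
      · exact Or.inr rfl
      · exact Or.inl hσ)
  have hφα : M.φ⁻¹ (M.σ y) = M.α y := by
    rw [Perm.inv_eq_iff_eq, M.φ_apply, M.αα]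
  refine ⟨?_, ?_, hσ⟩
  · by_contra hq
    have hq' : ¬ M.Quad col (M.φ⁻¹ y) := fun h => h.not_mono (by simpa using hy)
    obtain ⟨c, hc, h1, h2⟩ := hG.deg (M.ℓ y) (M.ℓ (M.α (M.σ y))) (M.ℓ (M.φ (M.φ (M.σ y))))
    rcases hG.nbr hc with ⟨z, hz, hm, hb⟩ | ⟨z, hz, hQ, hb⟩ <;> rcases hu z hz with rfl | rfl
    · exact hm hy
    · exact h1 hb.symm
    · exact hQ.elim hq hq'
    · exact h2 hb.symm
  · by_contra hq
    have hq' : ¬ M.Quad col (M.σ y) := fun h => hy' h.mono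
    obtain ⟨c, hc, h1, h2⟩ := hG.deg (M.ℓ y) (M.ℓ (M.α (M.σ y))) (M.ℓ (M.φ (M.φ y)))
    rcases hG.nbr hc with ⟨z, hz, hm, hb⟩ | ⟨z, hz, hQ, hb⟩ <;> rcases hu z hz with rfl | rfl
    · exact hm hy
    · exact h1 hb.symm
    · exact h2 hb.symm
    · rw [hφα] at hQ
      exact hQ.elim hq' hq

open Classical in
/-- The weight of a dart in the count around its starting vertex. -/
noncomputable def vw (M : PMap V D) (col : V → Bool) (y : D) : ℕ :=
  (if M.Mono col y then 1 else 0) + (if M.Corner col y then 1 else 0) +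
    (if M.Serving col y then 1 else 0)

/-- Every vertex receives at least two from the monochromatic darts, the corners between
two-coloured darts and the serving darts. -/
theorem Good.two_le_vw [Fintype D] [DecidableEq V] (hG : Good M col G) (v : V) :
    2 ≤ ∑ y with M.ℓ y = v, M.vw col y := by
  classical
  have pair : ∀ y z, y ≠ z → M.ℓ y = v → M.ℓ z = v → 2 ≤ M.vw col y + M.vw col z →
      2 ≤ ∑ y with M.ℓ y = v, M.vw col y := by
    intro y z hyz hy hz h
    rw [← Finset.sum_pair hyz] at h
    refine h.trans (Finset.sum_le_sum_of_subset ?_)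
    intro x hx
    rw [Finset.mem_insert, Finset.mem_singleton] at hx
    rcases hx with rfl | rfl <;> simp [hy, hz]
  have hm : ∀ y, M.Mono col y → 1 ≤ M.vw col y := by
    intro y h; simp only [vw, if_pos h]; omega
  have hc : ∀ y, M.Corner col y → 1 ≤ M.vw col y := by
    intro y h; simp only [vw, if_pos h]; omega
  by_cases h : ∃ y, M.ℓ y = v ∧ M.Mono col y
  · obtain ⟨y, hy, hmy⟩ := h
    by_cases h' : ∃ z, M.ℓ z = v ∧ M.Mono col z ∧ z ≠ y
    · obtain ⟨z, hz, hmz, hzy⟩ := h'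
      exact pair z y hzy hz hy (Nat.add_le_add (hm z hmz) (hm y hmy))
    · push Not at h'
      have hσy : M.ℓ (M.σ y) = v := by rw [M.ℓσ, hy]
      have hn1 : ¬ M.Mono col (M.σ y) := fun h => hG.σ_ne y (h' _ hσy h)
      by_cases hσ : M.σ (M.σ y) = y
      · have hs := hG.serving hmy hn1 hσ
        have h2 : 2 ≤ M.vw col y := by simp only [vw, if_pos hmy, if_pos hs]; omega
        refine pair y (M.σ y) (hG.σ_ne y).symm hy hσy (by omega)
      · have hn2 : ¬ M.Mono col (M.σ (M.σ y)) := fun h => hσ (h' _ (by rw [M.ℓσ, hσy]) h)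
        exact pair y (M.σ y) (hG.σ_ne y).symm hy hσy
          (Nat.add_le_add (hm y hmy) (hc _ ⟨hn1, hn2⟩))
  · push Not at h
    obtain ⟨y, hy⟩ := hG.exists_dart v
    have hσ : ∀ x, M.ℓ x = v → M.ℓ (M.σ x) = v := fun x hx => by rw [M.ℓσ, hx]
    have hcor : ∀ x, M.ℓ x = v → M.Corner col x := fun x hx => ⟨h x hx, h _ (hσ x hx)⟩
    exact pair y (M.σ y) (hG.σ_ne y).symm hy (hσ y hy)
      (Nat.add_le_add (hc _ (hcor _ hy)) (hc _ (hcor _ (hσ _ hy))))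

/-- The quadrangle darts joining two vertices of colour `true`; there is one in each
quadrangle. -/
def QA (M : PMap V D) (col : V → Bool) (d : D) : Prop := M.Quad col d ∧ col (M.ℓ d) = true

open Classical in
/-- The weight of a dart in the count along its face: `3`, minus `1` if it precedes a corner
between two-coloured darts, minus `1` if it lies in a quadrangle. -/
noncomputable def fw (M : PMap V D) (col : V → Bool) (d : D) : ℤ :=
  3 - (if M.Corner col (M.α d) then 1 else 0) -
    ((if M.QA col d then 1 else 0) + (if M.QA col (M.φ d) then 1 else 0) +
      (if M.QA col (M.φ (M.φ d)) then 1 else 0) + (if M.QA col (M.φ (M.φ (M.φ d))) then 1 else 0))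

theorem QA.colors {d : D} (h : M.QA col d) : M.φ (M.φ (M.φ (M.φ d))) = d ∧
    col (M.ℓ d) = true ∧ col (M.ℓ (M.φ d)) = true ∧
    col (M.ℓ (M.φ (M.φ d))) = false ∧ col (M.ℓ (M.φ (M.φ (M.φ d)))) = false := by
  obtain ⟨⟨h1, h2, h3, h4, -⟩, h0⟩ := h
  rw [h0] at h2 h3 h4
  exact ⟨h1, h0, h2, by simpa using h3, by simpa using h4⟩

theorem corner_α (d : D) : M.Corner col (M.α d) ↔
    col (M.ℓ (M.φ d)) ≠ col (M.ℓ d) ∧ col (M.ℓ (M.φ (M.φ d))) ≠ col (M.ℓ (M.φ d)) := by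
  rw [Corner, mono_α, mono_iff, ← φ_apply, mono_iff]

theorem two_le_fw (d : D) : 2 ≤ M.fw col d := by
  classical
  have hper : M.QA col d ∨ M.QA col (M.φ d) ∨ M.QA col (M.φ (M.φ d)) ∨
      M.QA col (M.φ (M.φ (M.φ d))) → M.φ (M.φ (M.φ (M.φ d))) = d := by
    rintro (h | h | h | h)
    · exact h.colors.1
    · exact M.φ.injective h.colors.1
    · exact M.φ.injective (M.φ.injective h.colors.1)
    · exact M.φ.injective (M.φ.injective (M.φ.injective h.colors.1))
  by_cases h : M.QA col d ∨ M.QA col (M.φ d) ∨ M.QA col (M.φ (M.φ d)) ∨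
      M.QA col (M.φ (M.φ (M.φ d)))
  · have h4 := hper h
    have q0 := fun h : M.QA col d => h.colors
    have q1 := fun h : M.QA col (M.φ d) => h.colors
    have q2 := fun h : M.QA col (M.φ (M.φ d)) => h.colors
    have q3 := fun h : M.QA col (M.φ (M.φ (M.φ d))) => h.colors
    simp only [h4] at q0 q1 q2 q3
    rw [fw]
    have hc := (corner_α (M := M) (col := col) d).1
    split_ifs <;> grind
  · push Not at h
    rw [fw, if_neg h.1, if_neg h.2.1, if_neg h.2.2.1, if_neg h.2.2.2]
    split_ifs <;> omega

theorem Good.φ_ne (hG : Good M col G) (d : D) : M.φ d ≠ d := fun h =>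
  hG.noLoop d (by rw [← M.ℓφ, h])

theorem Good.φφ_ne [Finite D] (hG : Good M col G) (d : D) : M.φ (M.φ d) ≠ d := fun h =>
  hG.σ_ne (M.α d) (by rw [← M.φ_apply]; exact hG.noDigon d h)

theorem fw_eq_three {d : D} (h1 : M.Mono col d) (h2 : M.Mono col (M.φ d)) :
    M.fw col d = 3 := by
  classical
  rw [mono_iff] at h1 h2
  have hc : ¬ M.Corner col (M.α d) := fun h => ((corner_α d).1 h).1 h1
  have n0 : ¬ M.QA col d := fun h => by
    obtain ⟨-, a0, a1, a2, a3⟩ := h.colors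
    rw [a1, a2] at h2; cases h2
  have n1 : ¬ M.QA col (M.φ d) := fun h => by
    obtain ⟨e, a0, a1, a2, a3⟩ := h.colors
    rw [M.φ.injective e] at a3
    rw [a3, a0] at h1; cases h1
  have n2 : ¬ M.QA col (M.φ (M.φ d)) := fun h => by
    obtain ⟨e, a0, a1, a2, a3⟩ := h.colors
    rw [M.φ.injective (M.φ.injective e)] at a2 a3
    rw [a0, a3] at h2; cases h2
  have n3 : ¬ M.QA col (M.φ (M.φ (M.φ d))) := fun h => by
    obtain ⟨e, a0, a1, a2, a3⟩ := h.colors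
    rw [M.φ.injective (M.φ.injective (M.φ.injective e))] at a1 a2 a3
    rw [a1, a2] at h1; cases h1
  rw [fw, if_neg hc, if_neg n0, if_neg n1, if_neg n2, if_neg n3]
  norm_num

open Classical in
/-- The first darts of a face: all of them in a triangle, and four of them otherwise. -/
noncomputable def seg (M : PMap V D) (d : D) : Finset D :=
  if M.φ (M.φ (M.φ d)) = d then {d, M.φ d, M.φ (M.φ d)}
    else {d, M.φ d, M.φ (M.φ d), M.φ (M.φ (M.φ d))}

theorem cls_seg [Finite D] (d x : D) (hx : x ∈ M.seg d) : cls M.φ x = cls M.φ d := by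
  unfold seg at hx
  split_ifs at hx <;> simp only [Finset.mem_insert, Finset.mem_singleton] at hx
  · rcases hx with rfl | rfl | rfl <;> simp only [cls_apply]
  · rcases hx with rfl | rfl | rfl | rfl <;> simp only [cls_apply]

/-- Every face receives at least eight, and more than that if two consecutive darts along it are
monochromatic. -/
theorem Good.seg_sum [Finite D] (hG : Good M col G) (d : D) :
    8 ≤ ∑ x ∈ M.seg d, M.fw col x ∧
      (M.Mono col d → M.Mono col (M.φ d) → 8 < ∑ x ∈ M.seg d, M.fw col x) := by
  classical
  have a1 := hG.φ_ne d
  have a2 := hG.φφ_ne d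
  have b1 := hG.φ_ne (M.φ d)
  have b2 := hG.φφ_ne (M.φ d)
  have c1 := hG.φ_ne (M.φ (M.φ d))
  unfold seg
  split_ifs with h
  · rw [Finset.sum_insert, Finset.sum_insert, Finset.sum_singleton]
    · have hno : ∀ z, M.φ (M.φ (M.φ z)) = z → ¬ M.QA col z := by
        intro z hz hq
        have h4 := hq.colors.1
        rw [hz] at h4
        exact hG.φ_ne z h4
      have n0 := hno _ h
      have n1 : ¬ M.QA col (M.φ d) := hno _ (by rw [h])
      have n2 : ¬ M.QA col (M.φ (M.φ d)) := hno _ (by rw [h])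
      simp only [fw, h, if_neg n0, if_neg n1, if_neg n2, corner_α, mono_iff]
      revert a1
      cases col (M.ℓ d) <;> cases col (M.ℓ (M.φ d)) <;> cases col (M.ℓ (M.φ (M.φ d))) <;> simp
    · simpa using b1.symm
    · simp only [Finset.mem_insert, Finset.mem_singleton, not_or]
      exact ⟨a1.symm, a2.symm⟩
  · rw [Finset.sum_insert, Finset.sum_insert, Finset.sum_insert, Finset.sum_singleton]
    · have f0 := two_le_fw (M := M) (col := col) d
      have f1 := two_le_fw (M := M) (col := col) (M.φ d)
      have f2 := two_le_fw (M := M) (col := col) (M.φ (M.φ d))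
      have f3 := two_le_fw (M := M) (col := col) (M.φ (M.φ (M.φ d)))
      refine ⟨by linarith, fun g1 g2 => ?_⟩
      rw [fw_eq_three g1 g2]
      linarith
    · simpa using c1.symm
    · simp only [Finset.mem_insert, Finset.mem_singleton, not_or]
      exact ⟨b1.symm, b2.symm⟩
    · simp only [Finset.mem_insert, Finset.mem_singleton, not_or]
      exact ⟨a1.symm, a2.symm, fun h' => h h'.symm⟩

end PMap

/-! ### The edge bound and the extremal case -/

namespace PMap

variable {V D : Type*} {M : PMap V D} {col : V → Bool} {G : SimpleGraph V}

open Classical in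
theorem sum_fw [Fintype D] : ∑ d, M.fw col d =
    3 * Fintype.card D - (Finset.univ.filter (M.Corner col)).card -
      4 * (Finset.univ.filter (M.QA col)).card := by
  have h1 : ∑ d, (if M.Corner col (M.α d) then (1 : ℤ) else 0) =
      (Finset.univ.filter (M.Corner col)).card := by
    rw [Equiv.sum_comp M.α (fun d => if M.Corner col d then (1 : ℤ) else 0)]
    simp
  have h0 : ∑ d, (if M.QA col d then (1 : ℤ) else 0) =
      (Finset.univ.filter (M.QA col)).card := by simp
  have hq : ∀ f : D → ℤ, ∑ d, f (M.φ d) = ∑ d, f d := fun f => Equiv.sum_comp M.φ f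
  simp only [fw, Finset.sum_sub_distrib, Finset.sum_add_distrib]
  have q1 := hq (fun d => if M.QA col d then 1 else 0)
  have q2 := hq (fun d => if M.QA col (M.φ d) then 1 else 0)
  have q3 := hq (fun d => if M.QA col (M.φ (M.φ d)) then 1 else 0)
  rw [q3, q2, q1, h0, h1]
  simp only [Finset.sum_const, Finset.card_univ, nsmul_eq_mul]
  ring

/-- Summing over the faces, and applying Euler's formula. -/
theorem Good.euler [Fintype V] [Fintype D] [Nonempty V] (hG : Good M col G) :
    8 * (cyc M.φ : ℤ) ≤ ∑ d, M.fw col d ∧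
    (Fintype.card D + 4 : ℤ) ≤ 2 * Fintype.card V + 2 * cyc M.φ ∧
      ∀ d, M.Mono col d → M.Mono col (M.φ d) → 8 * (cyc M.φ : ℤ) < ∑ d, M.fw col d := by
  classical
  obtain ⟨h1, h2⟩ := sum_over_cycles M.φ (M.fw col) 8 M.seg cls_seg
    (fun d => le_trans (by norm_num) (two_le_fw d)) fun d => (hG.seg_sum d).1
  obtain ⟨h3, -⟩ := sum_over_cycles M.α (fun _ => 1) 2 (fun d => {d, M.α d})
    (by
      intro d x hx
      rw [Finset.mem_insert, Finset.mem_singleton] at hx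
      rcases hx with rfl | rfl
      · rfl
      · rw [cls_apply])
    (fun _ => by norm_num)
    (fun d => by
      rw [Finset.sum_pair fun h => hG.noLoop d (by rw [← h])]; norm_num)
  have h4 : cyc M.σ ≤ Fintype.card V := by
    rw [cyc, ← Nat.card_eq_fintype_card]
    refine Nat.card_le_card_of_injective
      (Quot.lift M.ℓ fun a b (h : M.σ a = b) => by rw [← h, M.ℓσ]) ?_
    intro p q
    induction p using Quot.ind
    induction q using Quot.ind
    exact fun h => M.same _ _ h
  have h5 : 1 ≤ comps M.σ M.α := by
    obtain ⟨v⟩ := ‹Nonempty V›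
    obtain ⟨y, -⟩ := hG.exists_dart v
    have : Nonempty (Quot fun x y => M.σ x = y ∨ M.α x = y) := ⟨Quot.mk _ y⟩
    exact Nat.card_pos
  have h6 := M.planar
  have h7 : M.σ * M.α = M.φ := rfl
  simp only [defect, h7, Nat.card_eq_fintype_card] at h6
  simp only [Finset.sum_const, Finset.card_univ, nsmul_eq_mul, mul_one] at h3
  have h4' : (cyc M.σ : ℤ) ≤ Fintype.card V := by exact_mod_cast h4
  have h5' : (1 : ℤ) ≤ comps M.σ M.α := by exact_mod_cast h5
  exact ⟨h1, by linarith, fun d g1 g2 => h2 d ((hG.seg_sum d).2 g1 g2)⟩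

open Classical in
theorem sum_vw [Fintype D] (s : Finset D) : ∑ y ∈ s, M.vw col y =
    (s.filter (M.Mono col)).card + (s.filter (M.Corner col)).card +
      (s.filter (M.Serving col)).card := by
  simp only [vw, Finset.sum_add_distrib, Finset.sum_boole, Nat.cast_id]

open Classical in
/-- Summing over the vertices. -/
theorem Good.sum_vertices [Fintype V] [Fintype D] (hG : Good M col G) :
    2 * Fintype.card V ≤ ∑ y, M.vw col y ∧
      (∑ y, M.vw col y = 2 * Fintype.card V → Even (∑ y with col (M.ℓ y) = true, M.vw col y)) := by
  have h : ∑ y, M.vw col y = ∑ v, ∑ y with M.ℓ y = v, M.vw col y :=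
    (Finset.sum_fiberwise _ _ _).symm
  have h2 : 2 * Fintype.card V = ∑ _v : V, 2 := by
    rw [Finset.sum_const, Finset.card_univ, smul_eq_mul, mul_comm]
  rw [h, h2]
  refine ⟨Finset.sum_le_sum fun v _ => hG.two_le_vw v, fun heq => ?_⟩
  have heach := (Finset.sum_eq_sum_iff_of_le fun v _ => hG.two_le_vw v).1 heq.symm
  have h3 : ∑ y with col (M.ℓ y) = true, M.vw col y =
      ∑ v with col v = true, ∑ y with M.ℓ y = v, M.vw col y := by
    rw [← Finset.sum_fiberwise_of_maps_to (s := Finset.univ.filter fun y => col (M.ℓ y) = true)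
      (t := Finset.univ.filter fun v => col v = true) (g := M.ℓ) (by
        intro y hy; simpa using hy)]
    refine Finset.sum_congr rfl fun v hv => Finset.sum_congr ?_ fun _ _ => rfl
    ext y
    simp only [Finset.mem_filter, Finset.mem_univ, true_and] at hv ⊢
    constructor
    · exact fun h => h.2
    · rintro rfl; exact ⟨hv, rfl⟩
  rw [h3]
  refine Finset.even_sum _ fun v _ => ?_
  rw [← heach v (Finset.mem_univ v)]
  exact even_two

/-- The pair of vertices joined by a side or by one of the two diagonals of a quadrangle. -/
def ends (M : PMap V D) : D ⊕ (D ⊕ D) → V × V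
  | Sum.inl d => (M.ℓ d, M.ℓ (M.α d))
  | Sum.inr (Sum.inl d) => (M.ℓ d, M.ℓ (M.φ (M.φ d)))
  | Sum.inr (Sum.inr d) => (M.ℓ (M.φ d), M.ℓ (M.φ (M.φ (M.φ d))))

open Classical in
/-- The number of edges is at most the number of two-coloured sides and diagonals, and some of
these are counted twice: for a family `R` of second diagonals each of which has the same ends as
some first diagonal, its size may be subtracted. -/
theorem Good.edges_le [Fintype D] (hG : Good M col G) (E : Finset (V × V))
    (hE : ∀ p ∈ E, col p.1 = true ∧ G.Adj p.1 p.2) (R : Finset D)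
    (hR : ∀ d ∈ R, M.QA col d ∧ ∃ d', M.QA col d' ∧
      M.ends (Sum.inr (Sum.inl d')) = M.ends (Sum.inr (Sum.inr d))) :
    E.card + R.card ≤
      (Finset.univ.filter fun d => col (M.ℓ d) = true ∧ col (M.ℓ (M.α d)) = false).card +
        2 * (Finset.univ.filter (M.QA col)).card := by
  set U := Finset.univ.filter fun d => col (M.ℓ d) = true ∧ col (M.ℓ (M.α d)) = false with hU
  set Q := Finset.univ.filter (M.QA col) with hQ
  have hRQ : R ⊆ Q := fun d hd => by
    rw [hQ, Finset.mem_filter]; exact ⟨Finset.mem_univ _, (hR d hd).1⟩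
  have hsub : E ⊆ (U.disjSum (Q.disjSum (Q \ R))).image M.ends := by
    rintro ⟨a, b⟩ hab
    obtain ⟨ha, hadj⟩ := hE _ hab
    dsimp only at ha hadj
    have hb : col b = false := by
      have := hG.hcol _ _ hadj
      rw [ha] at this
      simpa using this.symm
    have first : ∀ d, M.QA col d → M.ends (Sum.inr (Sum.inl d)) = (a, b) →
        (a, b) ∈ (U.disjSum (Q.disjSum (Q \ R))).image M.ends := by
      intro d hd h
      rw [Finset.mem_image]
      exact ⟨Sum.inr (Sum.inl d), by simpa [hQ] using hd, h⟩
    rcases hG.real a b hadj with ⟨d, h1, h2⟩ | ⟨d, hd, ⟨h1, h2⟩ | ⟨h1, h2⟩⟩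
    · rw [Finset.mem_image]
      refine ⟨Sum.inl d, ?_, by rw [ends, h1, h2]⟩
      simp [hU, h1, h2, ha, hb]
    · exact first d ⟨hd, by rw [h1, ha]⟩ (by rw [ends, h1, h2])
    · have hqa : M.QA col d := ⟨hd, by rw [← hd.2.1, h1, ha]⟩
      by_cases hdR : d ∈ R
      · obtain ⟨-, d', hd', he⟩ := hR d hdR
        exact first d' hd' (by rw [he, ends, h1, h2])
      · rw [Finset.mem_image]
        refine ⟨Sum.inr (Sum.inr d), ?_, by rw [ends, h1, h2]⟩
        simp [hQ, hqa, hdR]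
  have h1 := (Finset.card_le_card hsub).trans Finset.card_image_le
  rw [Finset.card_disjSum, Finset.card_disjSum, Finset.card_sdiff_of_subset hRQ] at h1
  have h2 := Finset.card_le_card hRQ
  omega

/-- At a serving dart, the two quadrangles share a second side, namely the one at the starting
vertex; hence each of them has a diagonal joining the same two vertices. -/
theorem Serving.φ_eq {y : D} (h : M.Serving col y) :
    M.φ (M.φ (M.φ y)) = M.α (M.φ (M.α y)) := by
  apply M.φ.injective
  rw [h.1.1, M.φ_apply, M.αα, M.φ_apply, M.αα, h.2.2]

theorem quad_α_col {y : D} (h : M.Quad col y) : col (M.ℓ (M.α y)) = col (M.ℓ y) := h.mono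

open Classical in
/-- Each serving dart starting at colour `true` saves one edge. -/
theorem Good.edges_le_true [Fintype D] (hG : Good M col G) (E : Finset (V × V))
    (hE : ∀ p ∈ E, col p.1 = true ∧ G.Adj p.1 p.2) :
    E.card + (Finset.univ.filter fun y => M.Serving col y ∧ col (M.ℓ y) = true).card ≤
      (Finset.univ.filter fun d => col (M.ℓ d) = true ∧ col (M.ℓ (M.α d)) = false).card +
        2 * (Finset.univ.filter (M.QA col)).card := by
  refine hG.edges_le E hE _ ?_
  intro y hy
  rw [Finset.mem_filter] at hy
  obtain ⟨-, hs, hc⟩ := hy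
  refine ⟨⟨hs.1, hc⟩, M.α y, ⟨hs.2.1, by rw [quad_α_col hs.1, hc]⟩, ?_⟩
  rw [ends, ends, hs.φ_eq, M.ℓφ, M.ℓφ]

open Classical in
/-- Each serving dart starting at colour `false` saves one edge. -/
theorem Good.edges_le_false [Fintype D] (hG : Good M col G) (E : Finset (V × V))
    (hE : ∀ p ∈ E, col p.1 = true ∧ G.Adj p.1 p.2) :
    E.card + (Finset.univ.filter fun y => M.Serving col y ∧ col (M.ℓ y) = false).card ≤
      (Finset.univ.filter fun d => col (M.ℓ d) = true ∧ col (M.ℓ (M.α d)) = false).card +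
        2 * (Finset.univ.filter (M.QA col)).card := by
  have hinj : Function.Injective fun y => M.φ (M.φ y) := M.φ.injective.comp M.φ.injective
  rw [← Finset.card_image_of_injective _ hinj]
  refine hG.edges_le E hE _ ?_
  intro d hd
  rw [Finset.mem_image] at hd
  obtain ⟨y, hy, rfl⟩ := hd
  rw [Finset.mem_filter] at hy
  obtain ⟨-, hs, hc⟩ := hy
  have hne : ∀ z, M.Quad col z → col (M.ℓ z) = false → col (M.ℓ (M.φ (M.φ z))) = true := by
    intro z hz hcz
    have := hz.2.2.1
    rw [hcz] at this
    simpa using this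
  refine ⟨⟨hs.1.two, hne y hs.1 hc⟩, M.φ (M.φ (M.α y)), ⟨hs.2.1.two, ?_⟩, ?_⟩
  · exact hne _ hs.2.1 (by rw [quad_α_col hs.1, hc])
  · rw [ends, ends, hs.2.1.1, hs.1.1, hs.φ_eq, M.ℓφ, M.ℓφ]

open Classical in
theorem card_mono_add [Fintype D] : (Finset.univ.filter (M.Mono col)).card +
    2 * (Finset.univ.filter fun d => col (M.ℓ d) = true ∧ col (M.ℓ (M.α d)) = false).card =
      Fintype.card D := by
  have h1 : (Finset.univ.filter fun d => col (M.ℓ d) = false ∧ col (M.ℓ (M.α d)) = true).card =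
      (Finset.univ.filter fun d => col (M.ℓ d) = true ∧ col (M.ℓ (M.α d)) = false).card := by
    refine Finset.card_bij (fun d _ => M.α d) ?_ (fun a _ b _ h => M.α.injective h) ?_
    · intro d hd
      simp only [Finset.mem_filter, Finset.mem_univ, true_and, M.αα] at hd ⊢
      exact hd.symm
    · intro d hd
      refine ⟨M.α d, ?_, M.αα d⟩
      simp only [Finset.mem_filter, Finset.mem_univ, true_and, M.αα] at hd ⊢
      exact hd.symm
  have h2 : ∀ d, (if M.Mono col d then 1 else 0) +
      ((if col (M.ℓ d) = true ∧ col (M.ℓ (M.α d)) = false then 1 else 0) +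
      (if col (M.ℓ d) = false ∧ col (M.ℓ (M.α d)) = true then 1 else 0)) = 1 := by
    intro d
    rw [Mono]
    cases col (M.ℓ d) <;> cases col (M.ℓ (M.α d)) <;> simp
  rw [two_mul]
  nth_rewrite 2 [← h1]
  simp only [Finset.card_filter, ← Finset.sum_add_distrib, h2]
  simp

open Classical in
/-- If no two consecutive darts along a face are monochromatic, then the two-coloured darts
leaving colour `true` correspond to the ways of entering their starting vertex: along a
monochromatic dart, or through a corner between two-coloured darts. -/
theorem card_two_colored [Fintype D]
    (h : ∀ d, M.Mono col d → ¬ M.Mono col (M.φ d)) :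
    (Finset.univ.filter fun d => col (M.ℓ d) = true ∧ col (M.ℓ (M.α d)) = false).card =
      (Finset.univ.filter fun d => M.Mono col d ∧ col (M.ℓ d) = true).card +
        (Finset.univ.filter fun d => M.Corner col d ∧ col (M.ℓ d) = true).card := by
  have h1 : ∑ d, (if col (M.ℓ d) = true ∧ col (M.ℓ (M.α d)) = false then 1 else 0) =
      ∑ d, (if col (M.ℓ (M.φ d)) = true ∧ col (M.ℓ (M.α (M.φ d))) = false then 1 else 0) :=
    (Equiv.sum_comp M.φ (fun d => if col (M.ℓ d) = true ∧ col (M.ℓ (M.α d)) = false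
      then 1 else 0)).symm
  have h2 : ∑ d, (if M.Corner col d ∧ col (M.ℓ d) = true then 1 else 0) =
      ∑ d, (if M.Corner col (M.α d) ∧ col (M.ℓ (M.α d)) = true then 1 else 0) :=
    (Equiv.sum_comp M.α (fun d => if M.Corner col d ∧ col (M.ℓ d) = true then 1 else 0)).symm
  simp only [Finset.card_filter]
  rw [h1, h2, ← Finset.sum_add_distrib]
  refine Finset.sum_congr rfl fun d _ => ?_
  have h3 := h d
  rw [mono_iff, mono_iff] at h3
  simp only [corner_α, mono_iff, ← M.ℓφ]
  revert h3
  cases col (M.ℓ d) <;> cases col (M.ℓ (M.φ d)) <;> cases col (M.ℓ (M.φ (M.φ d))) <;> simp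

open Classical in
/-- The reversal of darts pairs up the monochromatic darts of each colour. -/
theorem Good.even_mono [Fintype D] (hG : Good M col G) :
    Even (Finset.univ.filter fun d => M.Mono col d ∧ col (M.ℓ d) = true).card := by
  rw [← ZMod.natCast_eq_zero_iff_even, Finset.card_eq_sum_ones, Nat.cast_sum]
  refine Finset.sum_involution (fun d _ => M.α d) ?_ ?_ ?_ ?_
  · intro d _; exact CharTwo.add_self_eq_zero _
  · intro d _ _ h
    exact hG.noLoop d (by rw [h])
  · intro d hd
    rw [Finset.mem_filter] at hd ⊢
    refine ⟨Finset.mem_univ _, (mono_α d).2 hd.2.1, ?_⟩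
    rw [hd.2.1, hd.2.2]
  · intro d _; exact M.αα d

/-- The edge bound for minimum degree at least three, and the parity in the extremal case. -/
theorem Good.bound [Fintype V] [Fintype D] [Nonempty V] (hG : Good M col G)
    (E : Finset (V × V)) (hE : ∀ p ∈ E, col p.1 = true ∧ G.Adj p.1 p.2) :
    E.card + 8 ≤ 3 * Fintype.card V ∧ (E.card + 8 = 3 * Fintype.card V → Even (Fintype.card V)) := by
  classical
  obtain ⟨f1, f2, f3⟩ := hG.euler
  obtain ⟨v1, v2⟩ := hG.sum_vertices
  have e1 := hG.edges_le_true E hE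
  have e2 := hG.edges_le_false E hE
  have m1 := card_mono_add (M := M) (col := col)
  have w1 := sum_vw (M := M) (col := col) Finset.univ
  have w2 := sum_vw (M := M) (col := col) (Finset.univ.filter fun y => col (M.ℓ y) = true)
  have w3 := sum_fw (M := M) (col := col)
  have s1 : (Finset.univ.filter (M.Serving col)).card =
      (Finset.univ.filter fun y => M.Serving col y ∧ col (M.ℓ y) = true).card +
      (Finset.univ.filter fun y => M.Serving col y ∧ col (M.ℓ y) = false).card := by
    rw [← Finset.card_filter_add_card_filter_not (s := Finset.univ.filter (M.Serving col))
      (fun y => col (M.ℓ y) = true)]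
    simp only [Finset.filter_filter, Bool.not_eq_true]
  simp only [Finset.filter_filter] at w2
  simp only [fun y => and_comm (a := col (M.ℓ y) = true) (b := M.Mono col y),
    fun y => and_comm (a := col (M.ℓ y) = true) (b := M.Corner col y),
    fun y => and_comm (a := col (M.ℓ y) = true) (b := M.Serving col y)] at w2
  -- The bound is the combination `e1 + e2`, `v1`, `f1` and four times `f2`, with the counts
  -- evaluated by `m1`, `w1` and `w3`.
  refine ⟨by omega, fun heq => ?_⟩
  have hno : ∀ d, M.Mono col d → ¬ M.Mono col (M.φ d) := by
    intro d h1 h2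
    have := f3 d h1 h2
    omega
  have t1 := card_two_colored hno
  have t2 := hG.even_mono
  have t3 := v2 (by omega)
  rw [w2] at t3
  rw [Nat.even_iff] at t2 t3 ⊢
  omega

end PMap

/-! ### Induction on the number of vertices -/

/-- Induced subgraphs of almost planar graphs are almost planar. -/
theorem almostPlanar_induce {V : Type*} {G : SimpleGraph V} (h : G.AlmostPlanar) (s : Set V) :
    (G.induce s).AlmostPlanar := by
  obtain ⟨Dr, hDr⟩ := h
  have hmem : ∀ e : (G.induce s).edgeSet, Sym2.map Subtype.val (e : Sym2 s) ∈ G.edgeSet := by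
    rintro ⟨e, he⟩
    induction e using Sym2.ind with
    | _ x y => exact he
  let ι : (G.induce s).edgeSet → G.edgeSet := fun e => ⟨_, hmem e⟩
  have hι : Function.Injective ι := by
    intro e f h
    exact Subtype.ext (Sym2.map.injective Subtype.val_injective (congrArg Subtype.val h))
  refine ⟨
    { pos := fun v => Dr.pos v
      pos_inj := Dr.pos_inj.comp Subtype.val_injective
      curve := fun e => Dr.curve (ι e)
      curve_cont := fun e => Dr.curve_cont _
      curve_inj := fun e => Dr.curve_inj _
      curve_ends := ?_
      interior_no_vertex := fun e t ht v => Dr.interior_no_vertex _ t ht _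
      finite_meet := fun e f hef => Dr.finite_meet _ _ (hι.ne hef)
      no_triple_point := fun p e f g h1 h2 h3 =>
        Dr.no_triple_point p _ _ _ (hι.ne h1) (hι.ne h2) (hι.ne h3) }, ?_⟩
  · rintro ⟨e, he⟩
    obtain ⟨a, b, hab, h0, h1⟩ := Dr.curve_ends (ι ⟨e, he⟩)
    induction e using Sym2.ind with
    | _ x y =>
      have hxy : s((x : V), (y : V)) = s(a, b) := hab
      rcases Sym2.eq_iff.1 hxy with ⟨rfl, rfl⟩ | ⟨rfl, rfl⟩
      · exact ⟨x, y, rfl, h0, h1⟩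
      · exact ⟨y, x, Sym2.eq_swap, h0, h1⟩
  · rintro e f g ⟨h1, h2⟩ ⟨h3, h4⟩
    exact hι (hDr (ι e) (ι f) (ι g) ⟨hι.ne h1, h2⟩ ⟨hι.ne h3, h4⟩)

/-- A bipartite graph has at most a quarter of the square of its order many edges. -/
theorem four_mul_ncard_le {V : Type*} [Fintype V] (G : SimpleGraph V) (h : G.Colorable 2) :
    4 * G.edgeSet.ncard ≤ Fintype.card V ^ 2 := by
  classical
  have h1 := SimpleGraph.IsBipartite.four_mul_encard_edgeSet_le (G := G) h
  rw [← (Set.toFinite G.edgeSet).cast_ncard_eq, ENat.card_eq_coe_fintype_card] at h1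
  exact_mod_cast h1

/-- A bipartite almost planar graph on `n ≥ 4` vertices has at most `3 n - 8` edges, and `n` is
even in the extremal case. -/
theorem edge_bound (n : ℕ) : ∀ (V : Type u) [Fintype V] (G : SimpleGraph V),
    Fintype.card V = n → 4 ≤ n → G.Colorable 2 → G.AlmostPlanar →
    G.edgeSet.ncard + 8 ≤ 3 * n ∧ (G.edgeSet.ncard + 8 = 3 * n → Even n) := by
  induction n with
  | zero => intro V _ G _ h; omega
  | succ n ih =>
    intro V _ G hV hn hcolor hap
    classical
    rcases Nat.eq_or_lt_of_le hn with h4 | h4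
    · have h := four_mul_ncard_le G hcolor
      rw [hV, ← h4] at h
      rw [← h4]
      exact ⟨by omega, fun _ => by decide⟩
    by_cases hdeg : ∀ v a b, ∃ c, G.Adj v c ∧ c ≠ a ∧ c ≠ b
    · obtain ⟨C⟩ := hcolor
      let col : V → Bool := fun v => decide (C v = 0)
      have hcol : ∀ a b, G.Adj a b → col a ≠ col b := by
        intro a b hab
        have h1 : ∀ p q : Fin 2, p ≠ q → decide (p = 0) ≠ decide (q = 0) := by decide
        exact h1 _ _ (C.valid hab)
      obtain ⟨D, hD, M, h1, h2, h3⟩ := exists_map_of_almostPlanar hap col hcol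
      have : Fintype D := Fintype.ofFinite D
      have : Nonempty V := Fintype.card_pos_iff.1 (by omega)
      let E : Finset (V × V) := Finset.univ.filter fun p => col p.1 = true ∧ G.Adj p.1 p.2
      obtain ⟨g1, g2⟩ := PMap.Good.bound (M := M) ⟨h1, h2, h3, hcol, hdeg⟩ E fun p hp =>
        (Finset.mem_filter.1 hp).2
      have hle : G.edgeSet.ncard ≤ E.card := by
        have hsub : G.edgeSet ⊆ (fun p : V × V => s(p.1, p.2)) '' (E : Set (V × V)) := by
          intro e he
          induction e using Sym2.ind with
          | _ a b =>
            have hab : G.Adj a b := he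
            by_cases ha : col a = true
            · exact ⟨(a, b), by simp [E, ha, hab], rfl⟩
            · have hb : col b = true := by
                have := hcol _ _ hab
                revert ha this
                cases col a <;> cases col b <;> simp
              exact ⟨(b, a), by simp [E, hb, hab.symm], Sym2.eq_swap⟩
        calc G.edgeSet.ncard ≤ _ := Set.ncard_le_ncard hsub (Set.toFinite _)
          _ ≤ (E : Set (V × V)).ncard := Set.ncard_image_le (Set.toFinite _)
          _ = E.card := Set.ncard_coe_finset E
      rw [hV] at g1 g2
      exact ⟨by omega, fun h => g2 (by omega)⟩
    · -- a vertex with at most two neighbours is removed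
      push Not at hdeg
      obtain ⟨v, a, b, hab⟩ := hdeg
      have hcard : Fintype.card ({v}ᶜ : Set V) = n := by
        rw [Fintype.card_compl_set, hV]
        simp
      obtain ⟨h1, -⟩ := ih ({v}ᶜ : Set V) (G.induce {v}ᶜ) hcard (by omega)
        (hcolor.of_hom (SimpleGraph.Embedding.induce _).toHom) (almostPlanar_induce hap _)
      have hsub : G.edgeSet ⊆
          Sym2.map Subtype.val '' (G.induce ({v}ᶜ : Set V)).edgeSet ∪ {s(v, a), s(v, b)} := by
        intro e he
        induction e using Sym2.ind with
        | _ x y =>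
          have hxy : G.Adj x y := he
          by_cases hx : x = v
          · subst hx
            right
            by_cases hy : y = a
            · left; rw [hy]
            · right; rw [hab y hxy hy]; rfl
          by_cases hy : y = v
          · subst hy
            right
            by_cases hx : x = a
            · left; rw [hx]; exact Sym2.eq_swap
            · right; rw [hab x hxy.symm hx]; exact Sym2.eq_swap
          left
          exact ⟨s(⟨x, hx⟩, ⟨y, hy⟩), hxy, rfl⟩
      have hle : G.edgeSet.ncard ≤ (G.induce ({v}ᶜ : Set V)).edgeSet.ncard + 2 := by
        calc G.edgeSet.ncard ≤ _ := Set.ncard_le_ncard hsub (Set.toFinite _)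
          _ ≤ _ := Set.ncard_union_le _ _
          _ ≤ _ := Nat.add_le_add (Set.ncard_image_le (Set.toFinite _)) 
            ((Set.ncard_insert_le _ _).trans (by rw [Set.ncard_singleton]))
      exact ⟨by omega, fun h => by omega⟩

end BAP

/-- If a bipartite almost planar simple graph on `v ≥ 4` vertices has exactly `3v - 8`
edges, then `v` is even and `v ≠ 6`. -/
theorem bipartite_almostPlanar_extremal_even {V : Type*} [Fintype V] (G : SimpleGraph V)
    (hcard : 4 ≤ Fintype.card V) (hbip : G.Colorable 2) (hap : G.AlmostPlanar)
    (hedges : G.edgeSet.ncard = 3 * Fintype.card V - 8) :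
    Even (Fintype.card V) ∧ Fintype.card V ≠ 6 := by
  refine ⟨(BAP.edge_bound _ V G rfl hcard hbip hap).2 (by omega), fun h6 => ?_⟩
  have h := BAP.four_mul_ncard_le G hbip
  rw [hedges, h6] at h
  omega
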